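/- Suppose every fundamental weight of 𝔤 is self-dual (ϖ_j = ϖ̄_j for all j), and let μ be a dominant integral weight, so that V_μ is either orthogonal or symplectic. If V_μ is orthogonal, then (adj(𝔤) ⊗ S²V_μ)^𝔤 = 0 and dim((adj(𝔤) ⊗ Λ²V_μ)^𝔤) equals the number of indices j with ⟨μ, α_j∨⟩ > 0; if V_μ is symplectic, then (adj(𝔤) ⊗ Λ²V_μ)^𝔤 = 0 and dim((adj(𝔤) ⊗ S²V_μ)^𝔤) equals the number of indices j with ⟨μ, α_j∨⟩ > 0. -/

import Mathlib

open scoped TensorProduct Classical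
open LieAlgebra LieModule Module

namespace AdjPaper

variable {L : Type} [LieRing L] [LieAlgebra ℂ L]

/-- `χ` is a root of `L` relative to the Cartan subalgebra `H`: a nonzero linear functional
on `H` with nontrivial root space. -/
def IsRoot (H : LieSubalgebra ℂ L) [H.IsCartanSubalgebra] (χ : Module.Dual ℂ H) : Prop :=
  χ ≠ 0 ∧ rootSpace H ⇑χ ≠ ⊥

/-- `t` is the coroot `χ∨` of the root `χ`: it lies in `⁅𝔤_χ, 𝔤_{-χ}⁆` and satisfies
`χ t = 2`. -/
def IsCoroot (H : LieSubalgebra ℂ L) [H.IsCartanSubalgebra] (χ : Module.Dual ℂ H) (t : H) : Prop :=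
  χ t = 2 ∧ ∃ e ∈ rootSpace H ⇑χ, ∃ f ∈ rootSpace H ⇑(-χ), (t : L) = ⁅e, f⁆

/-- `α` enumerates the simple roots of a base of the root system of `(L, H)`. -/
structure IsBase (H : LieSubalgebra ℂ L) [H.IsCartanSubalgebra] {r : ℕ} (α : Fin r → Module.Dual ℂ H) : Prop where
  isRoot : ∀ j, IsRoot H (α j)
  indep : LinearIndependent ℂ α
  pos_neg : ∀ χ : Module.Dual ℂ H, IsRoot H χ →
    (∃ c : Fin r → ℕ, χ = ∑ j, (c j : ℂ) • α j) ∨ (∃ c : Fin r → ℕ, χ = -∑ j, (c j : ℂ) • α j)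

/-- `χ` is a positive root relative to the base `α`. -/
def IsPosRoot (H : LieSubalgebra ℂ L) [H.IsCartanSubalgebra] {r : ℕ} (α : Fin r → Module.Dual ℂ H)
    (χ : Module.Dual ℂ H) : Prop :=
  IsRoot H χ ∧ ∃ c : Fin r → ℕ, χ = ∑ j, (c j : ℂ) • α j

/-- A weight `μ` is dominant integral: all its pairings `⟨μ, α_j∨⟩ = μ (hc j)` with the
simple coroots `hc j` are non-negative integers. -/
def IsDomInt {H : LieSubalgebra ℂ L} {r : ℕ} (hc : Fin r → H) (μ : Module.Dual ℂ H) : Prop :=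
  ∀ j, ∃ n : ℕ, μ (hc j) = (n : ℂ)

/-- `V` is an irreducible `L`-module with highest weight `μ` (relative to the Cartan
subalgebra `H` and the base `α`): it is irreducible and possesses a nonzero vector of
`H`-weight `μ` annihilated by all positive root spaces. -/
def IsHWIrrep (H : LieSubalgebra ℂ L) [H.IsCartanSubalgebra] {r : ℕ} (α : Fin r → Module.Dual ℂ H)
    (μ : Module.Dual ℂ H) (V : Type) [AddCommGroup V] [Module ℂ V]
    [LieRingModule L V] [LieModule ℂ L V] : Prop :=
  IsSimpleOrder (LieSubmodule ℂ L V) ∧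
  ∃ v : V, v ≠ 0 ∧ (∀ x : H, ⁅(x : L), v⁆ = μ x • v) ∧
    ∀ χ : Module.Dual ℂ H, IsPosRoot H α χ → ∀ e ∈ rootSpace H ⇑χ, ⁅e, v⁆ = 0

/-- `W` is isomorphic to the dual representation `V*`: there is a nondegenerate
`𝔤`-invariant pairing `W × V → ℂ`. -/
def IsDualPair (W V : Type) [AddCommGroup W] [Module ℂ W] [LieRingModule L W]
    [AddCommGroup V] [Module ℂ V] [LieRingModule L V] : Prop :=
  ∃ B : W →ₗ[ℂ] V →ₗ[ℂ] ℂ,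
    (∀ w, (∀ v, B w v = 0) → w = 0) ∧ (∀ v, (∀ w, B w v = 0) → v = 0) ∧
    ∀ (x : L) (w : W) (v : V), B ⁅x, w⁆ v + B w ⁅x, v⁆ = 0

/-- `V` is an orthogonal representation: it has a nondegenerate invariant symmetric
bilinear form. -/
def IsOrthogonalRep (V : Type) [AddCommGroup V] [Module ℂ V] [LieRingModule L V] : Prop :=
  ∃ B : V →ₗ[ℂ] V →ₗ[ℂ] ℂ,
    (∀ v w, B v w = B w v) ∧ (∀ v, (∀ w, B v w = 0) → v = 0) ∧
    ∀ (x : L) (v w : V), B ⁅x, v⁆ w + B v ⁅x, w⁆ = 0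

/-- `V` is a symplectic representation: it has a nondegenerate invariant alternating
bilinear form. -/
def IsSymplecticRep (V : Type) [AddCommGroup V] [Module ℂ V] [LieRingModule L V] : Prop :=
  ∃ B : V →ₗ[ℂ] V →ₗ[ℂ] ℂ,
    (∀ v, B v v = 0) ∧ (∀ v, (∀ w, B v w = 0) → v = 0) ∧
    ∀ (x : L) (v w : V), B ⁅x, v⁆ w + B v ⁅x, w⁆ = 0

variable (L) in
/-- The operator on `adj(𝔤) ⊗ V ⊗ V` exchanging the two copies of `V`. -/
noncomputable def swapMap (V : Type) [AddCommGroup V] [Module ℂ V] :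
    (L ⊗[ℂ] (V ⊗[ℂ] V)) →ₗ[ℂ] (L ⊗[ℂ] (V ⊗[ℂ] V)) :=
  LinearMap.lTensor L (TensorProduct.comm ℂ V V).toLinearMap

variable (L) in
/-- The `𝔤`-invariant subspace of `adj(𝔤) ⊗ S²V`, realised inside `adj(𝔤) ⊗ V ⊗ V` as the
invariant vectors fixed by the swap of the two copies of `V`. -/
noncomputable def symSquareInvariants (V : Type) [AddCommGroup V] [Module ℂ V]
    [LieRingModule L V] [LieModule ℂ L V] : Submodule ℂ (L ⊗[ℂ] (V ⊗[ℂ] V)) :=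
  (maxTrivSubmodule ℂ L (L ⊗[ℂ] (V ⊗[ℂ] V)) : Submodule ℂ (L ⊗[ℂ] (V ⊗[ℂ] V))) ⊓
    LinearMap.ker (swapMap L V - LinearMap.id)

variable (L) in
/-- The `𝔤`-invariant subspace of `adj(𝔤) ⊗ Λ²V`, realised inside `adj(𝔤) ⊗ V ⊗ V` as the
invariant vectors anti-fixed by the swap of the two copies of `V`. -/
noncomputable def altSquareInvariants (V : Type) [AddCommGroup V] [Module ℂ V]
    [LieRingModule L V] [LieModule ℂ L V] : Submodule ℂ (L ⊗[ℂ] (V ⊗[ℂ] V)) :=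
  (maxTrivSubmodule ℂ L (L ⊗[ℂ] (V ⊗[ℂ] V)) : Submodule ℂ (L ⊗[ℂ] (V ⊗[ℂ] V))) ⊓
    LinearMap.ker (swapMap L V + LinearMap.id)

set_option linter.unusedSectionVars false
set_option linter.unusedVariables false

section Basics

variable [FiniteDimensional ℂ L] [IsKilling ℂ L]
variable {H : LieSubalgebra ℂ L} [H.IsCartanSubalgebra]
variable {r : ℕ} {α : Fin r → Module.Dual ℂ H}

lemma isRoot_neg {χ : Module.Dual ℂ H} (h : IsRoot H χ) : IsRoot H (-χ) := by
  refine ⟨neg_ne_zero.mpr h.1, ?_⟩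
  have := (-(⟨⇑χ, h.2⟩ : Weight ℂ H L)).genWeightSpace_ne_bot
  exact this

/-- The nonnegative integral combination of the simple roots. -/
noncomputable def cmb (α : Fin r → Module.Dual ℂ H) (k : Fin r → ℕ) : Module.Dual ℂ H :=
  ∑ j, (k j : ℂ) • α j

lemma cmb_add (k l : Fin r → ℕ) : cmb α (k + l) = cmb α k + cmb α l := by
  simp [cmb, add_smul, Finset.sum_add_distrib]

lemma cmb_neg (k : Fin r → ℕ) : cmb (-α) k = - cmb α k := by
  simp [cmb]

@[simp] lemma cmb_zero : cmb α 0 = 0 := by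
  simp [cmb]

lemma cmb_eq_zero (hb : LinearIndependent ℂ α) {k : Fin r → ℕ} (h : cmb α k = 0) : k = 0 := by
  have := Fintype.linearIndependent_iff.mp hb (fun j => (k j : ℂ)) h
  funext j
  simpa using this j

lemma isBase_neg (hb : IsBase H α) : IsBase H (-α) where
  isRoot j := isRoot_neg (hb.isRoot j)
  indep := by
    have := hb.indep.units_smul (fun _ => (-1 : ℂˣ))
    convert this using 1
    ext j x
    simp [Units.smul_def]
  pos_neg χ h := by
    rcases hb.pos_neg χ h with ⟨c, hc⟩ | ⟨c, hc⟩
    · right; exact ⟨c, by simp [hc]⟩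
    · left; exact ⟨c, by simp [hc]⟩

lemma isCoroot_neg {χ : Module.Dual ℂ H} {t : H} (h : IsCoroot H χ t) : IsCoroot H (-χ) (-t) := by
  obtain ⟨h1, e, he, f, hf, h2⟩ := h
  refine ⟨by simpa using h1, f, hf, e, by simpa using he, ?_⟩
  rw [← lie_skew, ← h2]; rfl

lemma isPosRoot_neg {χ : Module.Dual ℂ H} (h : IsPosRoot H α χ) : IsPosRoot H (-α) (-χ) := by
  obtain ⟨h1, c, hc⟩ := h
  exact ⟨isRoot_neg h1, c, by simp [hc]⟩

lemma isPosRoot_or (hb : IsBase H α) {χ : Module.Dual ℂ H} (h : IsRoot H χ) :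
    IsPosRoot H α χ ∨ IsPosRoot H (-α) χ := by
  rcases hb.pos_neg χ h with ⟨c, hc⟩ | ⟨c, hc⟩
  · left; exact ⟨h, c, hc⟩
  · right; exact ⟨h, c, by simp [hc]⟩

lemma isPosRoot_not (hb : IsBase H α) {χ : Module.Dual ℂ H} (h : IsPosRoot H α χ)
    (h' : IsPosRoot H (-α) χ) : False := by
  obtain ⟨h1, c, hc⟩ := h
  obtain ⟨-, d, hd⟩ := h'
  have h3 : cmb α (c + d) = 0 := by
    rw [cmb_add]
    have h4 : χ = cmb α c := hc
    have h5 : χ = cmb (-α) d := hd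
    rw [cmb_neg] at h5
    rw [← h4, h5]; simp
  have h6 := cmb_eq_zero hb.indep h3
  have h7 : c = 0 := by
    funext j
    have := congrFun h6 j
    simp at this
    simp [this.1]
  apply h1.1
  rw [hc, h7]; simp

lemma isPosRoot_simple (hb : IsBase H α) (j : Fin r) : IsPosRoot H α (α j) :=
  ⟨hb.isRoot j, Pi.single j 1, by simp [Pi.single_apply]⟩

/-- The sum of positive root spaces. -/
noncomputable def nplus (H : LieSubalgebra ℂ L) [H.IsCartanSubalgebra]
    (α : Fin r → Module.Dual ℂ H) : Submodule ℂ L :=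
  ⨆ χ : {χ : Module.Dual ℂ H // IsPosRoot H α χ}, (rootSpace H ⇑χ.1).toSubmodule

lemma mem_nplus {χ : Module.Dual ℂ H} (h : IsPosRoot H α χ) {x : L} (hx : x ∈ rootSpace H ⇑χ) :
    x ∈ nplus H α :=
  Submodule.mem_iSup_of_mem (p := fun χ : {χ : Module.Dual ℂ H // IsPosRoot H α χ} =>
    (rootSpace H ⇑χ.1).toSubmodule) ⟨χ, h⟩ hx

lemma decomp (hb : IsBase H α) :
    H.toSubmodule ⊔ nplus H α ⊔ nplus H (-α) = ⊤ := by
  have h := cartan_sup_iSup_rootSpace_eq_top H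
  have h2 := congrArg LieSubmodule.toSubmodule h
  rw [LieSubmodule.sup_toSubmodule, LieSubmodule.top_toSubmodule] at h2
  rw [eq_top_iff, ← h2]
  refine sup_le ?_ ?_
  · exact le_sup_of_le_left (le_sup_of_le_left le_rfl)
  · simp only [LieSubmodule.iSup_toSubmodule]
    refine iSup_le fun β => iSup_le fun hβ => ?_
    have hr : IsRoot H (Weight.toLinear ℂ H L β) :=
      ⟨by simpa using hβ, β.genWeightSpace_ne_bot⟩
    rcases isPosRoot_or hb hr with h | h
    · exact fun x hx => Submodule.mem_sup_left (Submodule.mem_sup_right (mem_nplus h hx))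
    · exact fun x hx => Submodule.mem_sup_right (mem_nplus h hx)

variable {V : Type} [AddCommGroup V] [Module ℂ V] [LieRingModule L V] [LieModule ℂ L V]

/-- `v` is a highest weight vector. -/
def IsHWV (H : LieSubalgebra ℂ L) [H.IsCartanSubalgebra] (α : Fin r → Module.Dual ℂ H)
    (μ : Module.Dual ℂ H) (v : V) : Prop :=
  v ≠ 0 ∧ (∀ x : H, ⁅(x : L), v⁆ = μ x • v) ∧
    ∀ χ : Module.Dual ℂ H, IsPosRoot H α χ → ∀ e ∈ rootSpace H ⇑χ, ⁅e, v⁆ = 0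

/-- honest weight spaces -/
def wt (H : LieSubalgebra ℂ L) (V : Type) [AddCommGroup V] [Module ℂ V] [LieRingModule L V]
    [LieModule ℂ L V] (ν : Module.Dual ℂ H) : Submodule ℂ V where
  carrier := {m | ∀ x : H, ⁅(x : L), m⁆ = ν x • m}
  add_mem' := by
    intro a b ha hb x
    rw [lie_add, ha x, hb x, smul_add]
  zero_mem' := by intro x; simp
  smul_mem' := by
    intro c a ha x
    rw [lie_smul, ha x, smul_comm]

lemma mem_wt {ν : Module.Dual ℂ H} {m : V} : m ∈ wt H V ν ↔ ∀ x : H, ⁅(x : L), m⁆ = ν x • m :=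
  Iff.rfl

lemma lie_mem_wt {χ ν : Module.Dual ℂ H} {x : L} (hx : x ∈ rootSpace H ⇑χ) {m : V}
    (hm : m ∈ wt H V ν) : ⁅x, m⁆ ∈ wt H V (χ + ν) := by
  intro h
  have h1 := IsKilling.lie_eq_smul_of_mem_rootSpace hx h
  have h1' : ⁅(h : L), x⁆ = χ h • x := h1
  rw [leibniz_lie, h1', hm h]
  simp [add_smul]

lemma wt_indep : iSupIndep (fun ν : Module.Dual ℂ H => wt H V ν) := by
  have h := LieModule.iSupIndep_genWeightSpace ℂ H V
  have h2 : iSupIndep fun χ : H → ℂ ↦ (genWeightSpace V χ).toSubmodule :=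
    LieSubmodule.iSupIndep_toSubmodule.mpr h
  have h3 := h2.comp (f := fun ν : Module.Dual ℂ H => (⇑ν : H → ℂ)) DFunLike.coe_injective
  refine h3.mono fun ν m hm => ?_
  refine weightSpace_le_genWeightSpace V (⇑ν : H → ℂ) ?_
  rw [mem_weightSpace]
  exact hm

/-- `ℂ v` plus lower weight spaces -/
noncomputable def hull (α : Fin r → Module.Dual ℂ H) (μ : Module.Dual ℂ H) (v : V) :
    Submodule ℂ V :=
  Submodule.span ℂ {v} ⊔ ⨆ k : {k : Fin r → ℕ // k ≠ 0}, wt H V (μ - cmb α k.1)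

lemma mem_hull_wt (α : Fin r → Module.Dual ℂ H) (μ : Module.Dual ℂ H) (v : V)
    {k : Fin r → ℕ} (hk : k ≠ 0) {m : V} (hm : m ∈ wt H V (μ - cmb α k)) : m ∈ hull α μ v :=
  Submodule.mem_sup_right (Submodule.mem_iSup_of_mem
    (p := fun k : {k : Fin r → ℕ // k ≠ 0} => wt H V (μ - cmb α k.1)) ⟨k, hk⟩ hm)

lemma hull_weight (hb : LinearIndependent ℂ α) {μ ν : Module.Dual ℂ H} {v m : V}
    (hv : v ∈ wt H V μ) (hm : m ∈ wt H V ν) (hm0 : m ≠ 0) (h : m ∈ hull α μ v) :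
    (∃ k : Fin r → ℕ, k ≠ 0 ∧ μ = ν + cmb α k) ∨ (ν = μ ∧ m ∈ Submodule.span ℂ {v}) := by
  by_contra hcon
  push Not at hcon
  obtain ⟨h1, h2⟩ := hcon
  have hind := wt_indep (H := H) (V := V) ν
  rw [Submodule.disjoint_def] at hind
  by_cases hν : ν = μ
  · subst hν
    obtain ⟨a, ha, b, hb', hab⟩ := Submodule.mem_sup.mp h
    have hb2 : b ∈ ⨆ χ, ⨆ (_ : χ ≠ ν), wt H V χ := by
      refine (iSup_le fun k => ?_ : _ ≤ ⨆ χ, ⨆ (_ : χ ≠ ν), wt H V χ) hb'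
      refine le_iSup₂_of_le (ν - cmb α k.1) ?_ le_rfl
      intro h3
      apply k.2
      apply cmb_eq_zero hb
      simpa using h3
    have ha2 : a ∈ wt H V ν := by
      refine (Submodule.span_le.mpr ?_ : Submodule.span ℂ {v} ≤ wt H V ν) ha
      simpa using hv
    have hb3 : b ∈ wt H V ν := by
      have : b = m - a := by rw [← hab]; simp
      rw [this]; exact sub_mem hm ha2
    have := hind b hb3 hb2
    apply h2 rfl
    rw [← hab, this, add_zero]; exact ha
  · apply hm0
    refine hind m hm ?_
    refine (sup_le ?_ (iSup_le fun k => ?_) : hull α μ v ≤ ⨆ χ, ⨆ (_ : χ ≠ ν), wt H V χ) h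
    · rw [Submodule.span_le]
      simp only [Set.singleton_subset_iff, SetLike.mem_coe]
      exact (le_iSup₂_of_le (f := fun χ (_ : χ ≠ ν) => wt H V χ) μ (Ne.symm hν) le_rfl) hv
    · refine le_iSup₂_of_le (μ - cmb α k.1) ?_ le_rfl
      intro h3
      apply h1 k.1 k.2
      rw [← h3]; simp

end Basics

section Cyclic

variable [FiniteDimensional ℂ L] [IsKilling ℂ L]
variable {H : LieSubalgebra ℂ L} [H.IsCartanSubalgebra]
variable {r : ℕ} {α : Fin r → Module.Dual ℂ H}
variable {V : Type} [AddCommGroup V] [Module ℂ V] [LieRingModule L V] [LieModule ℂ L V]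

/-- filtration of the cyclic module -/
noncomputable def filt (n : Submodule ℂ L) (v : V) : ℕ → Submodule ℂ V
  | 0 => Submodule.span ℂ {v}
  | k + 1 => filt n v k ⊔ Submodule.span ℂ {m | ∃ y ∈ n, ∃ s ∈ filt n v k, m = ⁅y, s⁆}

lemma filt_mono (n : Submodule ℂ L) (v : V) : Monotone (filt n v) :=
  monotone_nat_of_le_succ fun k => by rw [filt]; exact le_sup_left

lemma filt_lie {n : Submodule ℂ L} {v : V} {k : ℕ} {y : L} (hy : y ∈ n) {s : V}
    (hs : s ∈ filt n v k) : ⁅y, s⁆ ∈ filt n v (k + 1) := by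
  rw [filt]
  exact Submodule.mem_sup_right (Submodule.subset_span ⟨y, hy, s, hs, rfl⟩)

/-- elements mapping p into q -/
def stab (p q : Submodule ℂ V) : Submodule ℂ L where
  carrier := {x | ∀ s ∈ p, ⁅x, s⁆ ∈ q}
  add_mem' := by
    intro a b ha hb s hs
    rw [add_lie]; exact add_mem (ha s hs) (hb s hs)
  zero_mem' := by intro s _; simp
  smul_mem' := by
    intro c a ha s hs
    rw [smul_lie]; exact q.smul_mem c (ha s hs)

lemma nplus_le {α : Fin r → Module.Dual ℂ H} {p : Submodule ℂ L}
    (h : ∀ χ : Module.Dual ℂ H, IsPosRoot H α χ → ∀ e ∈ rootSpace H ⇑χ, e ∈ p) :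
    nplus H α ≤ p :=
  iSup_le fun χ => fun e he => h χ.1 χ.2 e he

lemma filt_stab (hb : IsBase H α) {μ : Module.Dual ℂ H} {v : V} (hv : IsHWV H α μ v) (k : ℕ) :
    H.toSubmodule ⊔ nplus H α ≤ stab (filt (nplus H (-α)) v k) (filt (nplus H (-α)) v k) := by
  induction k with
  | zero =>
    refine sup_le ?_ (nplus_le ?_)
    · intro x hx s hs
      obtain ⟨c, rfl⟩ := Submodule.mem_span_singleton.mp hs
      rw [lie_smul]
      have := hv.2.1 ⟨x, hx⟩
      simp only at this
      rw [this]
      exact Submodule.smul_mem _ _ (Submodule.smul_mem _ _ (Submodule.mem_span_singleton_self v))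
    · intro χ hχ e he s hs
      obtain ⟨c, rfl⟩ := Submodule.mem_span_singleton.mp hs
      rw [lie_smul, hv.2.2 χ hχ e he]
      simp
  | succ k ih =>
    intro x hx s hs
    rw [filt] at hs
    obtain ⟨a, ha, b, hb', rfl⟩ := Submodule.mem_sup.mp hs
    rw [lie_add]
    refine add_mem (filt_mono _ _ (Nat.le_succ k) (ih hx a ha)) ?_
    clear hs ha a
    induction hb' using Submodule.span_induction with
    | mem m hm =>
      obtain ⟨y, hy, s, hs, rfl⟩ := hm
      rw [leibniz_lie]
      refine add_mem ?_ (filt_lie hy (ih hx s hs))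
      have h1 : ⁅x, y⁆ ∈ H.toSubmodule ⊔ nplus H α ⊔ nplus H (-α) := by
        rw [decomp hb]; trivial
      obtain ⟨b, hb1, n, hn, hbn⟩ := Submodule.mem_sup.mp h1
      rw [← hbn, add_lie]
      exact add_mem (filt_mono _ _ (Nat.le_succ k) (ih hb1 s hs)) (filt_lie hn hs)
    | zero => simp
    | add a b _ _ ha hb => rw [lie_add]; exact add_mem ha hb
    | smul c a _ ha => rw [lie_smul]; exact Submodule.smul_mem _ _ ha

/-- the union as a Lie submodule -/
noncomputable def filtSub (hb : IsBase H α) {μ : Module.Dual ℂ H} {v : V} (hv : IsHWV H α μ v) :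
    LieSubmodule ℂ L V where
  toSubmodule := ⨆ k, filt (nplus H (-α)) v k
  lie_mem := by
    intro x m hm
    have hm' : m ∈ ⨆ k, filt (nplus H (-α)) v k := hm
    change ⁅x, m⁆ ∈ ⨆ k, filt (nplus H (-α)) v k
    rw [Submodule.mem_iSup_of_directed _ (filt_mono _ _).directed_le] at hm' ⊢
    obtain ⟨k, hk⟩ := hm'
    refine ⟨k + 1, ?_⟩
    have h1 : x ∈ H.toSubmodule ⊔ nplus H α ⊔ nplus H (-α) := by
      rw [decomp hb]; trivial
    obtain ⟨b, hb1, n, hn, hbn⟩ := Submodule.mem_sup.mp h1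
    rw [← hbn, add_lie]
    exact add_mem (filt_mono _ _ (Nat.le_succ k) (filt_stab hb hv k hb1 m hk)) (filt_lie hn hk)

lemma cyclic (hb : IsBase H α) {μ : Module.Dual ℂ H} {v : V} (hv : IsHWV H α μ v)
    {p : Submodule ℂ V} (hvp : v ∈ p)
    (hp : ∀ χ : Module.Dual ℂ H, IsPosRoot H (-α) χ → ∀ f ∈ rootSpace H ⇑χ, ∀ m ∈ p, ⁅f, m⁆ ∈ p) :
    (LieSubmodule.lieSpan ℂ L {v}).toSubmodule ≤ p := by
  have h1 : LieSubmodule.lieSpan ℂ L {v} ≤ filtSub hb hv := by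
    rw [LieSubmodule.lieSpan_le]
    simp only [Set.singleton_subset_iff]
    change v ∈ ⨆ k, filt (nplus H (-α)) v k
    exact Submodule.mem_iSup_of_mem 0 (Submodule.mem_span_singleton_self v)
  have h2 : (filtSub hb hv).toSubmodule ≤ p := by
    change ⨆ k, filt (nplus H (-α)) v k ≤ p
    have hst : nplus H (-α) ≤ stab p p := nplus_le fun χ hχ f hf m hm => hp χ hχ f hf m hm
    refine iSup_le fun k => ?_
    induction k with
    | zero => rw [filt, Submodule.span_le]; simpa using hvp
    | succ k ih =>
      rw [filt]
      refine sup_le ih ?_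
      rw [Submodule.span_le]
      rintro m ⟨y, hy, s, hs, rfl⟩
      exact hst hy s (ih hs)
  exact fun x hx => h2 (h1 hx)

lemma hull_stable (hb : IsBase H α) {μ : Module.Dual ℂ H} {v : V} (hv : v ∈ wt H V μ)
    (χ : Module.Dual ℂ H) (hχ : IsPosRoot H (-α) χ) (f : L) (hf : f ∈ rootSpace H ⇑χ) (m : V)
    (hm : m ∈ hull α μ v) : ⁅f, m⁆ ∈ hull α μ v := by
  obtain ⟨hr, c, hc⟩ := hχ
  have hc' : χ = - cmb α c := by
    rw [← cmb_neg]; exact hc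
  have hc0 : c ≠ 0 := by
    rintro rfl
    apply hr.1
    rw [hc']; simp
  suffices h : hull α μ v ≤ (hull α μ v).comap (toEnd ℂ L V f) from h hm
  refine sup_le ?_ (iSup_le fun k => ?_)
  · rw [Submodule.span_le]
    simp only [Set.singleton_subset_iff]
    change ⁅f, v⁆ ∈ hull α μ v
    refine mem_hull_wt α μ v hc0 ?_
    have := lie_mem_wt hf hv
    rwa [hc', neg_add_eq_sub] at this
  · intro m hm
    change ⁅f, m⁆ ∈ hull α μ v
    refine mem_hull_wt α μ v (k := c + k.1) ?_ ?_
    · intro h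
      apply hc0
      funext j
      have := congrFun h j
      simp at this
      simp [this.1]
    · have := lie_mem_wt hf hm
      rw [hc'] at this
      convert this using 1
      rw [cmb_add, neg_add_eq_sub, sub_sub, add_comm]

lemma lieSpan_le_hull (hb : IsBase H α) {μ : Module.Dual ℂ H} {v : V} (hv : IsHWV H α μ v) :
    (LieSubmodule.lieSpan ℂ L {v}).toSubmodule ≤ hull α μ v :=
  cyclic hb hv (Submodule.mem_sup_left (Submodule.mem_span_singleton_self v))
    (hull_stable hb hv.2.1)

end Cyclic

section Existence

variable [FiniteDimensional ℂ L] [IsKilling ℂ L]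
variable {H : LieSubalgebra ℂ L} [H.IsCartanSubalgebra]
variable {r : ℕ} {α : Fin r → Module.Dual ℂ H}

lemma exists_height (hb : IsBase H α) : ∃ ρ : H, ∀ j, α j ρ = 1 := by
  obtain ⟨g, hg⟩ := LinearMap.exists_leftInverse_of_injective (Fintype.linearCombination ℂ α)
    (by
      rw [LinearMap.ker_eq_bot]
      exact hb.indep.fintypeLinearCombination_injective)
  let φ : Module.Dual ℂ (Module.Dual ℂ H) := (∑ j, LinearMap.proj j) ∘ₗ g
  refine ⟨(Module.evalEquiv ℂ H).symm φ, fun j => ?_⟩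
  have h1 : φ (α j) = 1 := by
    have h2 := LinearMap.congr_fun hg (Pi.single j 1)
    have h3 : Fintype.linearCombination ℂ α (Pi.single j 1) = α j := by
      simp
    simp only [LinearMap.comp_apply, h3] at h2
    simp [φ, h2]
  rw [← h1]
  have := Module.apply_evalEquiv_symm_apply (R := ℂ) (M := H) (α j) φ
  exact this

variable {V : Type} [AddCommGroup V] [Module ℂ V] [LieRingModule L V] [LieModule ℂ L V]

lemma exists_hwv [FiniteDimensional ℂ V] [Nontrivial V] (hb : IsBase H α) :
    ∃ (ν : Module.Dual ℂ H) (v : V), IsHWV H α ν v := by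
  obtain ⟨ρ, hρ⟩ := exists_height hb
  have : Nonempty (Weight ℂ H V) := by
    by_contra hcon
    rw [not_nonempty_iff] at hcon
    have := iSup_genWeightSpace_eq_top' ℂ H V
    rw [iSup_of_empty] at this
    exact bot_ne_top this
  obtain ⟨χ, hχ⟩ := Finite.exists_max (fun χ : Weight ℂ H V => (χ ρ).re)
  obtain ⟨v, hv0, hv⟩ := exists_forall_lie_eq_smul ℂ H V χ
  have hvw : v ∈ wt H V (Weight.toLinear ℂ H V χ) := fun x => hv x
  refine ⟨Weight.toLinear ℂ H V χ, v, hv0, hvw, fun χ' hχ' e he => ?_⟩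
  by_contra hne
  have h1 := lie_mem_wt he hvw
  have h2 : genWeightSpace V (⇑(χ' + Weight.toLinear ℂ H V χ) : H → ℂ) ≠ ⊥ := by
    intro h
    apply hne
    have h3 : ⁅e, v⁆ ∈ genWeightSpace V (⇑(χ' + Weight.toLinear ℂ H V χ) : H → ℂ) := by
      refine weightSpace_le_genWeightSpace V _ ?_
      rw [mem_weightSpace]
      exact h1
    rw [h] at h3
    simpa using h3
  have h4 := hχ ⟨_, h2⟩
  obtain ⟨hr, c, hc⟩ := hχ'
  have h5 : χ' ρ = ((∑ j, c j : ℕ) : ℂ) := by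
    rw [hc]; simp [hρ]
  have h6 : (∑ j, c j) ≠ 0 := by
    intro h
    apply hr.1
    rw [hc]
    apply Finset.sum_eq_zero
    intro j hj
    have : c j = 0 := by
      have := (Finset.sum_eq_zero_iff.mp h) j hj
      exact this
    simp [this]
  have h7 : ((χ' + Weight.toLinear ℂ H V χ) ρ).re ≤ (χ ρ).re := h4
  rw [LinearMap.add_apply, h5] at h7
  simp only [Complex.add_re, Complex.natCast_re, Weight.toLinear_apply] at h7
  have : (0:ℝ) < ((∑ j, c j : ℕ) : ℝ) := by
    exact_mod_cast Nat.pos_of_ne_zero h6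
  linarith

lemma exists_hwv_sub [FiniteDimensional ℂ V] (hb : IsBase H α) {N : LieSubmodule ℂ L V}
    (hN : N ≠ ⊥) : ∃ (ν : Module.Dual ℂ H) (v : V), v ∈ N ∧ IsHWV H α ν v := by
  have : Nontrivial N := (LieSubmodule.nontrivial_iff_ne_bot ℂ L V).mpr hN
  obtain ⟨ν, v, hv0, hv1, hv2⟩ := exists_hwv (V := N) hb
  refine ⟨ν, v, v.2, by simpa using hv0, fun x => ?_, fun χ hχ e he => ?_⟩
  · exact congrArg Subtype.val (hv1 x)
  · exact congrArg Subtype.val (hv2 χ hχ e he)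

lemma sl2_of_coroot {χ : Module.Dual ℂ H} {t : H} (ht : χ t = 2) {e f : L}
    (he : e ∈ rootSpace H ⇑χ) (hf : f ∈ rootSpace H ⇑(-χ)) (h : (t : L) = ⁅e, f⁆) :
    IsSl2Triple (t : L) e f where
  h_ne_zero := by
    intro h0
    have : t = 0 := by exact_mod_cast h0
    simp [this] at ht
  lie_e_f := h.symm
  lie_h_e_nsmul := by
    have h1 : ⁅(t : L), e⁆ = χ t • e := IsKilling.lie_eq_smul_of_mem_rootSpace he t
    rw [h1, ht]
    exact ofNat_smul_eq_nsmul ℂ 2 e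
  lie_h_f_nsmul := by
    have h1 : ⁅(t : L), f⁆ = (-χ) t • f := IsKilling.lie_eq_smul_of_mem_rootSpace hf t
    rw [h1, LinearMap.neg_apply, ht, neg_smul]
    congr 1
    exact ofNat_smul_eq_nsmul ℂ 2 f

lemma hwv_dom [FiniteDimensional ℂ V] (hb : IsBase H α) {hc : Fin r → H}
    (hco : ∀ j, IsCoroot H (α j) (hc j)) {ν : Module.Dual ℂ H} {v : V} (hv : IsHWV H α ν v)
    (i : Fin r) : ∃ n : ℕ, ν (hc i) = n := by
  obtain ⟨h2, e, he, f, hf, hef⟩ := hco i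
  have t := sl2_of_coroot h2 he hf hef
  have P : t.HasPrimitiveVectorWith v (ν (hc i)) :=
    ⟨hv.1, hv.2.1 _, hv.2.2 _ (isPosRoot_simple hb i) e he⟩
  exact P.exists_nat

lemma hwv_kill [FiniteDimensional ℂ V] (hb : IsBase H α) {t : H} {i : Fin r}
    (h2 : α i t = 2) {e f : L}
    (he : e ∈ rootSpace H ⇑(α i)) (hf : f ∈ rootSpace H ⇑(-α i)) (hef : (t : L) = ⁅e, f⁆)
    {ν : Module.Dual ℂ H} {v : V} (hv : IsHWV H α ν v) (h0 : ν t = 0) : ⁅f, v⁆ = 0 := by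
  have t := sl2_of_coroot h2 he hf hef
  have P : t.HasPrimitiveVectorWith v (ν _) :=
    ⟨hv.1, hv.2.1 _, hv.2.2 _ (isPosRoot_simple hb i) e he⟩
  have := P.pow_toEnd_f_eq_zero_of_eq_nat (n := 0) (by simpa using h0)
  simpa using this

end Existence

section Casimir

variable [FiniteDimensional ℂ L] [IsKilling ℂ L]
variable {V : Type} [AddCommGroup V] [Module ℂ V] [LieRingModule L V] [LieModule ℂ L V]

/-- Casimir type operator -/
noncomputable def cas {ι : Type} [Fintype ι] (a a' : ι → L) (V : Type) [AddCommGroup V]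
    [Module ℂ V] [LieRingModule L V] [LieModule ℂ L V] : V →ₗ[ℂ] V :=
  ∑ i, (toEnd ℂ L V (a i)) ∘ₗ (toEnd ℂ L V (a' i))

lemma cas_apply {ι : Type} [Fintype ι] (a a' : ι → L) (m : V) :
    cas a a' V m = ∑ i, ⁅a i, ⁅a' i, m⁆⁆ := by
  simp [cas]

lemma killing_nondeg {x : L} (h : ∀ y, killingForm ℂ L x y = 0) : x = 0 := by
  have : x ∈ LinearMap.ker (killingForm ℂ L) := by
    rw [LinearMap.mem_ker]; ext y; simpa using h y
  rwa [IsKilling.ker_killingForm_eq_bot, Submodule.mem_bot] at this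

lemma killing_inv (x y z : L) : killingForm ℂ L ⁅x, y⁆ z = - killingForm ℂ L y ⁅x, z⁆ := by
  have := LieModule.traceForm_apply_lie_apply ℂ L L y x z
  rw [← lie_skew, map_neg, LinearMap.neg_apply]
  change - traceForm ℂ L L ⁅y, x⁆ z = - traceForm ℂ L L y ⁅x, z⁆
  rw [this]

lemma killing_comm (x y : L) : killingForm ℂ L x y = killingForm ℂ L y x :=
  LieModule.traceForm_comm ℂ L L x y

lemma cas_lie {ι : Type} [Fintype ι] {a a' : ι → L}
    (h : ∀ y, ∑ i, killingForm ℂ L (a' i) y • a i = y) (z : L) (m : V) :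
    cas a a' V ⁅z, m⁆ = ⁅z, cas a a' V m⁆ := by
  have h' : ∀ y, ∑ i, killingForm ℂ L (a i) y • a' i = y := by
    intro y
    rw [← sub_eq_zero]
    apply killing_nondeg
    intro x
    rw [map_sub, LinearMap.sub_apply, sub_eq_zero]
    conv_rhs => rw [← h x]
    simp only [map_sum, map_smul, LinearMap.sum_apply, LinearMap.smul_apply, smul_eq_mul]
    refine Finset.sum_congr rfl fun i _ => ?_
    rw [killing_comm (a i) y]; ring
  have key : ∑ i, (⁅⁅z, a i⁆, ⁅a' i, m⁆⁆ + ⁅a i, ⁅⁅z, a' i⁆, m⁆⁆) = 0 := by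
    rw [Finset.sum_add_distrib]
    have e1 : ∑ i, ⁅⁅z, a i⁆, ⁅a' i, m⁆⁆
        = ∑ i, ∑ j, killingForm ℂ L (a' j) ⁅z, a i⁆ • ⁅a j, ⁅a' i, m⁆⁆ := by
      refine Finset.sum_congr rfl fun i _ => ?_
      conv_lhs => rw [← h ⁅z, a i⁆]
      rw [sum_lie]
      simp only [smul_lie]
    have e2 : ∑ j, ⁅a j, ⁅⁅z, a' j⁆, m⁆⁆
        = ∑ j, ∑ i, killingForm ℂ L (a i) ⁅z, a' j⁆ • ⁅a j, ⁅a' i, m⁆⁆ := by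
      refine Finset.sum_congr rfl fun j _ => ?_
      conv_lhs => rw [← h' ⁅z, a' j⁆]
      rw [sum_lie, lie_sum]
      simp only [smul_lie, lie_smul]
    rw [e1, e2, Finset.sum_comm, ← Finset.sum_add_distrib]
    refine Finset.sum_eq_zero fun j _ => ?_
    rw [← Finset.sum_add_distrib]
    refine Finset.sum_eq_zero fun i _ => ?_
    rw [← add_smul, killing_comm (a i), killing_inv, add_neg_cancel, zero_smul]
  rw [cas_apply, cas_apply, lie_sum, ← sub_eq_zero, ← Finset.sum_sub_distrib,
    ← neg_eq_zero, ← Finset.sum_neg_distrib, ← key]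
  refine Finset.sum_congr rfl fun i _ => ?_
  rw [leibniz_lie z (a i), leibniz_lie z (a' i), lie_add]
  abel

end Casimir

section Casimir2

variable [FiniteDimensional ℂ L] [IsKilling ℂ L]
variable {H : LieSubalgebra ℂ L} [H.IsCartanSubalgebra]

/-- the element of the Cartan dual to a weight -/
noncomputable def tt (lam : Module.Dual ℂ H) : H := (IsKilling.cartanEquivDual H).symm lam

lemma killing_tt (lam : Module.Dual ℂ H) (h : H) :
    killingForm ℂ L (tt lam : L) (h : L) = lam h := by
  have h1 : IsKilling.cartanEquivDual H (tt lam) h = lam h := by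
    rw [tt, LinearEquiv.apply_symm_apply]
  rw [← h1, IsKilling.cartanEquivDual_apply_apply]
  rfl

lemma tt_comm (lam ν : Module.Dual ℂ H) : lam (tt ν) = ν (tt lam) := by
  rw [← killing_tt, ← killing_tt, killing_comm]

lemma tt_add (lam ν : Module.Dual ℂ H) : tt (lam + ν) = tt lam + tt ν := map_add _ _ _

lemma tt_smul (c : ℂ) (ν : Module.Dual ℂ H) : tt (c • ν) = c • tt ν := map_smul _ _ _

lemma tt_sum {ι : Type} (s : Finset ι) (f : ι → Module.Dual ℂ H) :
    tt (∑ i ∈ s, f i) = ∑ i ∈ s, tt (f i) := map_sum _ _ _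

lemma exists_ef (β : Weight ℂ H L) : ∃ e f : L, e ∈ rootSpace H ⇑β ∧
    f ∈ rootSpace H (-⇑β) ∧ killingForm ℂ L e f = 1 := by
  obtain ⟨e, he, he0⟩ : ∃ e ∈ rootSpace H ⇑β, e ≠ 0 := by
    by_contra hcon
    push Not at hcon
    exact absurd ((LieSubmodule.eq_bot_iff _).mpr hcon) β.genWeightSpace_ne_bot
  obtain ⟨f, hfα, hf⟩ : ∃ f ∈ rootSpace H (-⇑β), killingForm ℂ L e f ≠ 0 := by
    contrapose! he0
    simpa using mem_ker_killingForm_of_mem_rootSpace_of_forall_rootSpace_neg ℂ L H he he0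
  exact ⟨e, (killingForm ℂ L e f)⁻¹ • f, he, Submodule.smul_mem _ _ hfα, by simp [hf]⟩

variable {r : ℕ} {α : Fin r → Module.Dual ℂ H}

/-- positive roots -/
noncomputable def posr (α : Fin r → Module.Dual ℂ H) : Finset (Weight ℂ H L) :=
  H.root.filter fun β => IsPosRoot H α (Weight.toLinear ℂ H L β)

/-- sum of positive roots -/
noncomputable def rho2 (α : Fin r → Module.Dual ℂ H) : Module.Dual ℂ H :=
  ∑ β ∈ posr α, Weight.toLinear ℂ H L β

lemma isRoot_of_mem_root {β : Weight ℂ H L} (h : β ∈ H.root) :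
    IsRoot H (Weight.toLinear ℂ H L β) := by
  have : β.IsNonZero := by simpa [LieSubalgebra.root] using h
  exact ⟨by simpa using this, β.genWeightSpace_ne_bot⟩

/-- Casimir data: explicit element of `L ⊗ L`. -/
lemma exists_casimir (H : LieSubalgebra ℂ L) [H.IsCartanSubalgebra] :
    ∃ (n : ℕ) (a a' : Fin n ⊕ H.root → L),
      (∀ y, ∑ i, killingForm ℂ L (a' i) y • a i = y) ∧
      ∀ (r : ℕ) (α : Fin r → Module.Dual ℂ H), IsBase H α →
      ∀ (V : Type) [AddCommGroup V] [Module ℂ V] [LieRingModule L V] [LieModule ℂ L V]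
        (ν : Module.Dual ℂ H) (v : V), IsHWV H α ν v →
        cas a a' V v = (ν (tt ν) + ν (tt (rho2 α))) • v := by
  choose e f he hf hef using exists_ef (L := L) (H := H)
  let b := Module.finBasis ℂ H
  refine ⟨finrank ℂ H, Sum.elim (fun i => (b i : L)) (fun β => e β.1),
    Sum.elim (fun i => (tt (b.coord i) : L)) (fun β => f β.1), ?_, ?_⟩
  · intro y
    simp only [Fintype.sum_sum_type, Sum.elim_inl, Sum.elim_inr]
    let T : L →ₗ[ℂ] L :=
      (∑ i, (killingForm ℂ L (tt (b.coord i) : L)).smulRight (b i : L)) +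
      ∑ β : H.root, (killingForm ℂ L (f β.1)).smulRight (e β.1)
    suffices hT : T = LinearMap.id by
      have := LinearMap.congr_fun hT y
      simpa [T] using this
    have hH0 : ∀ h : H, (h : L) ∈ rootSpace H (0 : H → ℂ) := by
      intro h
      rw [rootSpace_zero_eq]; exact h.2
    have hroot : ∀ β : H.root, (⇑β.1 : H → ℂ) ≠ 0 := by
      intro β h
      apply (isRoot_of_mem_root β.2).1
      ext h'
      simpa using congrFun h h'
    have htop : (⊤ : Submodule ℂ L) ≤ LinearMap.eqLocus T LinearMap.id := by
      have h := cartan_sup_iSup_rootSpace_eq_top H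
      have h2 := congrArg LieSubmodule.toSubmodule h
      rw [LieSubmodule.sup_toSubmodule, LieSubmodule.top_toSubmodule] at h2
      rw [← h2]
      refine sup_le ?_ ?_
      · intro y hy
        change T y = y
        have h1 : ∀ β : H.root, killingForm ℂ L (f β.1) y = 0 := by
          intro β
          refine killingForm_apply_eq_zero_of_mem_rootSpace_of_add_ne_zero ℂ L H (hf β.1)
            (hH0 ⟨y, hy⟩) ?_
          simpa using hroot β
        have h3 : ∑ i, killingForm ℂ L (tt (b.coord i) : L) y • (b i : L) = y := by
          have h4 := congrArg Subtype.val (b.sum_repr ⟨y, hy⟩)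
          simp only [AddSubmonoidClass.coe_finsetSum] at h4
          conv_rhs => rw [← h4]
          refine Finset.sum_congr rfl fun i _ => ?_
          rw [killing_tt (b.coord i) ⟨y, hy⟩]
          simp
        simp [T, h1, h3]
      · simp only [LieSubmodule.iSup_toSubmodule]
        refine iSup_le fun γ => iSup_le fun hγ => ?_
        intro y hy
        change T y = y
        have hy' : y ∈ rootSpace H ⇑γ := hy
        have hγ0 : (⇑γ : H → ℂ) ≠ 0 := hγ
        have h1 : ∀ i, killingForm ℂ L (tt (b.coord i) : L) y = 0 := by
          intro i
          refine killingForm_apply_eq_zero_of_mem_rootSpace_of_add_ne_zero ℂ L H (hH0 _) hy' ?_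
          simpa using hγ0
        have hγr : γ ∈ H.root := by simpa [LieSubalgebra.root] using hγ
        have h3 : ∑ β : H.root, killingForm ℂ L (f β.1) y • e β.1 = y := by
          rw [Finset.sum_eq_single (⟨γ, hγr⟩ : H.root)]
          · have hne : (⟨e γ, he γ⟩ : rootSpace H ⇑γ) ≠ 0 := by
              intro h0
              have h0' : e γ = 0 := congrArg Subtype.val h0
              have := hef γ
              rw [h0'] at this
              simp at this
            obtain ⟨c, hc⟩ := (finrank_eq_one_iff_of_nonzero' _ hne).mp
              (IsKilling.finrank_rootSpace_eq_one γ hγ) ⟨y, hy'⟩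
            have hc' : c • e γ = y := congrArg Subtype.val hc
            rw [← hc', map_smul, killing_comm, hef]
            simp
          · intro β _ hβ
            rw [killingForm_apply_eq_zero_of_mem_rootSpace_of_add_ne_zero ℂ L H (hf β.1) hy',
              zero_smul]
            intro h0
            apply hβ
            apply Subtype.ext
            apply DFunLike.coe_injective
            exact (neg_add_eq_zero.mp h0)
          · intro h; exact absurd (Finset.mem_univ _) h
        have hT : T y = (∑ i, killingForm ℂ L (tt (b.coord i) : L) y • (b i : L)) +
            ∑ β : H.root, killingForm ℂ L (f β.1) y • e β.1 := by
          simp only [T, LinearMap.add_apply, LinearMap.sum_apply, LinearMap.smulRight_apply]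
        rw [hT, h3]
        simp [h1]
    ext y
    exact htop (Submodule.mem_top : y ∈ ⊤)
  · intro r α hb V _ _ _ _ ν v hv
    rw [cas_apply]
    simp only [Fintype.sum_sum_type, Sum.elim_inl, Sum.elim_inr]
    rw [add_smul]
    congr 1
    · have h1 : ν (tt ν) = ∑ i, ν (tt (b.coord i)) * ν (b i) := by
        have h2 : ν = ∑ i, ν (b i) • b.coord i := by
          apply b.ext
          intro j
          simp [LinearMap.sum_apply, Finsupp.single_apply]
        have h3 : tt ν = ∑ i, ν (b i) • tt (b.coord i) := by
          conv_lhs => rw [h2]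
          rw [tt_sum]
          simp only [tt_smul]
        rw [h3, map_sum]
        refine Finset.sum_congr rfl fun i _ => ?_
        rw [map_smul, smul_eq_mul, mul_comm]
      rw [h1, Finset.sum_smul]
      refine Finset.sum_congr rfl fun i _ => ?_
      rw [hv.2.1, lie_smul, hv.2.1, smul_smul]
    · rw [rho2, tt_sum, map_sum, Finset.sum_smul, posr, Finset.sum_filter]
      rw [← Finset.sum_coe_sort (s := H.root)]
      refine Finset.sum_congr rfl fun β _ => ?_
      split_ifs with hβ
      · have h1 : ⁅e β.1, v⁆ = 0 := hv.2.2 _ hβ _ (he β.1)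
        have h2 : ⁅e β.1, ⁅f β.1, v⁆⁆ = ⁅⁅e β.1, f β.1⁆, v⁆ := by
          rw [leibniz_lie, h1, lie_zero, add_zero]
        rw [h2, IsKilling.lie_eq_killingForm_smul_of_mem_rootSpace_of_mem_rootSpace_neg (he β.1)
          (hf β.1), hef, one_smul]
        exact hv.2.1 _
      · have hr := isRoot_of_mem_root β.2
        have h3 : IsPosRoot H α (-(Weight.toLinear ℂ H L β.1)) := by
          rcases isPosRoot_or hb hr with h | h
          · exact absurd h hβ
          · simpa using isPosRoot_neg h
        rw [hv.2.2 _ h3 _ (hf β.1), lie_zero]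

end Casimir2

section Strict

variable [FiniteDimensional ℂ L] [IsKilling ℂ L]
variable {H : LieSubalgebra ℂ L} [H.IsCartanSubalgebra]
variable {r : ℕ} {α : Fin r → Module.Dual ℂ H}

/-- a root as a Mathlib weight -/
def rw' {χ : Module.Dual ℂ H} (h : IsRoot H χ) : Weight ℂ H L := ⟨⇑χ, h.2⟩

lemma rw'_nz {χ : Module.Dual ℂ H} (h : IsRoot H χ) : (rw' h).IsNonZero := by
  intro h0
  apply h.1
  ext x
  exact congrFun h0 x

lemma rw'_lin {χ : Module.Dual ℂ H} (h : IsRoot H χ) : Weight.toLinear ℂ H L (rw' h) = χ := by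
  ext x; rfl

lemma coroot_data {χ : Module.Dual ℂ H} (h : IsRoot H χ) {t : H} (ht : IsCoroot H χ t) :
    t = IsKilling.coroot (rw' h) := by
  obtain ⟨h2, e, he, f, hf, hef⟩ := ht
  have h3 := IsKilling.lie_eq_killingForm_smul_of_mem_rootSpace_of_mem_rootSpace_neg
    (α := rw' h) he hf
  refine IsKilling.eq_coroot_of_mem_corootSpace_of_two _ ?_ h2
  rw [LieAlgebra.mem_corootSpace]
  exact Submodule.subset_span ⟨e, he, f, hf, hef.symm⟩

lemma tt_simple {χ : Module.Dual ℂ H} (h : IsRoot H χ) {t : H} (ht : IsCoroot H χ t) :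
    ∃ s : ℝ, 0 < s ∧ tt χ = (s : ℂ) • t := by
  have h1 := coroot_data h ht
  have h0 : (χ (tt χ)) ≠ 0 := IsKilling.root_apply_cartanEquivDual_symm_ne_zero (rw'_nz h)
  have h2 : t = (2 * (χ (tt χ))⁻¹) • tt χ := by
    rw [h1, IsKilling.coroot]
    rw [← ofNat_smul_eq_nsmul ℂ 2, smul_smul]
    rfl
  have h3 : tt χ = (χ (tt χ) / 2) • t := by
    conv_rhs => rw [h2]
    rw [smul_smul]
    field_simp
    simp
  have h4 : killingForm ℂ L (t : L) (t : L) * (χ (tt χ)) = 4 := by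
    have h5 : killingForm ℂ L (tt χ : L) (t : L) = 2 := by rw [killing_tt, ht.1]
    have h6 : (tt χ : L) = (χ (tt χ) / 2) • (t : L) := congrArg Subtype.val h3
    rw [h6, map_smul, LinearMap.smul_apply, smul_eq_mul] at h5
    linear_combination 2 * h5
  have h7 : ∃ q : ℝ, 0 ≤ q ∧ killingForm ℂ L (t : L) (t : L) = q := by
    have h8 := LinearMap.congr_fun (LinearMap.congr_fun
      (IsKilling.restrict_killingForm_eq_sum (K := ℂ) (L := L) (H := H)) t) t
    have h9 : killingForm ℂ L (t : L) (t : L) = ∑ β ∈ H.root, β t * β t := by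
      refine Eq.trans h8 ?_
      simp
      rfl
    refine ⟨∑ β ∈ H.root, ((chainBotCoeff (rw' h) β - chainTopCoeff (rw' h) β : ℤ) : ℝ) ^ 2,
      Finset.sum_nonneg fun _ _ => sq_nonneg _, ?_⟩
    rw [h9]
    push_cast
    refine Finset.sum_congr rfl fun β _ => ?_
    rw [h1, IsKilling.apply_coroot_eq_cast]
    push_cast
    ring
  obtain ⟨q, hq0, hq⟩ := h7
  rw [hq] at h4
  have hq1 : q ≠ 0 := by
    rintro rfl
    simp at h4
  refine ⟨2 / q, div_pos two_pos (lt_of_le_of_ne hq0 (Ne.symm hq1)), ?_⟩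
  have hq2 : (q : ℂ) ≠ 0 := by exact_mod_cast hq1
  have h10 : χ (tt χ) / 2 = ((2 / q : ℝ) : ℂ) := by
    push_cast
    field_simp
    linear_combination h4
  rw [← h10]; exact h3

lemma cmb_coord (hb : IsBase H α) {k l : Fin r → ℂ} (h : ∑ j, k j • α j = ∑ j, l j • α j) :
    k = l := by
  have h1 : ∑ j, (k - l) j • α j = 0 := by
    simp [sub_smul, h]
  have := Fintype.linearIndependent_iff.mp hb.indep _ h1
  funext j
  exact sub_eq_zero.mp (this j)

lemma rho2_coroot (hb : IsBase H α) {hc : Fin r → H} (hco : ∀ j, IsCoroot H (α j) (hc j))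
    (i : Fin r) : rho2 α (hc i) = 2 := by
  set γ : Weight ℂ H L := rw' (hb.isRoot i) with hγ
  have hγl : Weight.toLinear ℂ H L γ = α i := rw'_lin _
  have hcγ : hc i = IsKilling.coroot γ := coroot_data (hb.isRoot i) (hco i)
  have hγm : γ ∈ posr α := by
    rw [posr, Finset.mem_filter]
    refine ⟨by simpa [LieSubalgebra.root] using rw'_nz (hb.isRoot i), ?_⟩
    rw [hγl]; exact isPosRoot_simple hb i
  have hγ2 : γ (hc i) = 2 := (hco i).1
  rw [rho2, LinearMap.sum_apply, ← Finset.add_sum_erase _ _ hγm]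
  have : ∑ x ∈ (posr α).erase γ, (Weight.toLinear ℂ H L x) (hc i) = 0 := by
    have hrefl : ∀ β : Weight ℂ H L, ∀ x, IsKilling.reflectRoot γ β x = β x - β (hc i) * γ x := by
      intro β x
      rw [hcγ]; rfl
    refine Finset.sum_involution (fun β _ => IsKilling.reflectRoot γ β) ?_ ?_ ?_ ?_
    · intro β hβ
      simp only [Weight.toLinear_apply, hrefl, hγ2]
      ring
    · intro β hβ h1 h2
      apply h1
      have := congrArg (fun w : Weight ℂ H L => w (hc i)) h2
      simp only [hrefl, hγ2] at this
      rw [Weight.toLinear_apply]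
      linear_combination (-1/2 : ℂ) * this
    · intro β hβ
      rw [Finset.mem_erase, posr, Finset.mem_filter] at hβ
      obtain ⟨hne, hroot, hpos⟩ := hβ
      have hnz : β.IsNonZero := by simpa [LieSubalgebra.root] using hroot
      have hrm : IsKilling.reflectRoot γ β ∈ H.root := by
        simpa [LieSubalgebra.root] using IsKilling.reflectRoot_isNonZero γ β hnz
      obtain ⟨c, hc1⟩ := hpos.2
      -- some other coefficient is nonzero
      obtain ⟨j, hji, hj⟩ : ∃ j, j ≠ i ∧ c j ≠ 0 := by
        by_contra hcon
        push Not at hcon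
        have h1 : Weight.toLinear ℂ H L β = (c i : ℂ) • α i := by
          rw [hc1, Finset.sum_eq_single i]
          · intro j _ hj
            simp [hcon j hj]
          · simp
        have h2 : (⇑β : H → ℂ) = (c i : ℂ) • ⇑γ := by
          funext x
          exact LinearMap.congr_fun h1 x
        rcases IsKilling.eq_neg_or_eq_of_eq_smul γ β hnz _ h2 with h3 | h3
        · refine isPosRoot_not hb hpos ?_
          have h4 : Weight.toLinear ℂ H L β = - α i := by
            rw [h3]; ext x; simp [← hγl]
          rw [h4]
          exact isPosRoot_neg (isPosRoot_simple hb i)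
        · exact hne h3
      have hlin : Weight.toLinear ℂ H L (IsKilling.reflectRoot γ β)
          = ∑ l, ((c l : ℂ) - if l = i then β (hc i) else 0) • α l := by
        simp only [sub_smul, Finset.sum_sub_distrib, ← hc1]
        ext x
        simp only [Weight.toLinear_apply, hrefl, LinearMap.sub_apply]
        simp [ite_smul, ← hγl]
      have hposr : IsPosRoot H α (Weight.toLinear ℂ H L (IsKilling.reflectRoot γ β)) := by
        rcases isPosRoot_or hb (isRoot_of_mem_root hrm) with h | h
        · exact h
        · exfalso
          obtain ⟨-, d, hd⟩ := h
          have hd' : Weight.toLinear ℂ H L (IsKilling.reflectRoot γ β)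
            = ∑ l, (-(d l : ℂ)) • α l := by rw [hd]; simp
          rw [hlin] at hd'
          have h5 := congrFun (cmb_coord hb hd') j
          simp only [hji, if_false, sub_zero] at h5
          have h6 : ((c j + d j : ℕ) : ℂ) = 0 := by
            push_cast; linear_combination h5
          have h7 : c j + d j = 0 := by exact_mod_cast h6
          omega
      rw [Finset.mem_erase, posr, Finset.mem_filter]
      refine ⟨?_, hrm, hposr⟩
      intro h8
      rw [h8, hγl] at hlin
      have h9 : ∑ l, (if l = i then (1:ℂ) else 0) • α l
          = ∑ l, ((c l : ℂ) - if l = i then β (hc i) else 0) • α l := by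
        rw [← hlin]; simp
      have h10 := congrFun (cmb_coord hb h9) j
      simp only [hji, if_false, sub_zero] at h10
      apply hj
      exact_mod_cast h10.symm
    · intro β hβ
      apply DFunLike.coe_injective
      funext x
      simp only [hrefl, hγ2]
      ring
  rw [this, add_zero]
  exact hγ2

/-- the Casimir eigenvalue -/
noncomputable def casv (α : Fin r → Module.Dual ℂ H) (ν : Module.Dual ℂ H) : ℂ :=
  ν (tt ν) + ν (tt (rho2 α))

lemma strict (hb : IsBase H α) {hc : Fin r → H} (hco : ∀ j, IsCoroot H (α j) (hc j))
    {μ ν : Module.Dual ℂ H} (hμ : ∀ i, ∃ n : ℕ, μ (hc i) = n) (hν : ∀ i, ∃ n : ℕ, ν (hc i) = n)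
    {k : Fin r → ℕ} (h : μ = ν + cmb α k) (hcas : casv α μ = casv α ν) : k = 0 := by
  choose s hs0 hs using fun i => tt_simple (hb.isRoot i) (hco i)
  choose m hm using hμ
  choose n hn using hν
  have h1 : ∀ lam : Module.Dual ℂ H, (cmb α k) (tt lam) = ∑ i, (k i : ℂ) * (s i * lam (hc i)) := by
    intro lam
    rw [cmb, LinearMap.sum_apply]
    refine Finset.sum_congr rfl fun i _ => ?_
    rw [LinearMap.smul_apply, smul_eq_mul, tt_comm, hs, map_smul, smul_eq_mul]
  have h2 : casv α μ - casv α ν = (cmb α k) (tt μ) + (cmb α k) (tt ν) + (cmb α k) (tt (rho2 α)) := by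
    have e1 : (cmb α k) (tt μ) = μ (tt (cmb α k)) := tt_comm _ _
    rw [casv, casv]
    have e2 : ∀ t, μ t = ν t + (cmb α k) t := fun t => by rw [h]; rfl
    have e3 : tt μ = tt ν + tt (cmb α k) := by rw [h, tt_add]
    rw [e2, e2, e3, map_add, map_add, tt_comm ν (cmb α k)]
    ring
  have h3 : ((∑ i, (k i : ℝ) * (s i * (m i + n i + 2)) : ℝ) : ℂ) = 0 := by
    have : casv α μ - casv α ν = 0 := by rw [hcas, sub_self]
    rw [← this, h2, h1, h1, h1, ← Finset.sum_add_distrib, ← Finset.sum_add_distrib]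
    push_cast
    refine Finset.sum_congr rfl fun i _ => ?_
    rw [hm, hn, rho2_coroot hb hco]
    ring
  have h4 : ∑ i, (k i : ℝ) * (s i * (m i + n i + 2)) = 0 := by exact_mod_cast h3
  rw [Finset.sum_eq_zero_iff_of_nonneg] at h4
  · funext i
    have h5 := h4 i (Finset.mem_univ i)
    have h6 : s i * ((m i : ℝ) + n i + 2) ≠ 0 := by
      have := hs0 i
      positivity
    rcases mul_eq_zero.mp h5 with h7 | h7
    · exact_mod_cast h7
    · exact absurd h7 h6
  · intro i _
    have := hs0 i
    positivity

end Strict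

section ThmA

variable [FiniteDimensional ℂ L] [IsKilling ℂ L]
variable {H : LieSubalgebra ℂ L} [H.IsCartanSubalgebra]
variable {r : ℕ} {α : Fin r → Module.Dual ℂ H}
variable {V : Type} [AddCommGroup V] [Module ℂ V] [LieRingModule L V] [LieModule ℂ L V]

lemma casv_eq {r' : ℕ} {α' : Fin r' → Module.Dual ℂ H} (hb : IsBase H α) (hb' : IsBase H α')
    {μ ν : Module.Dual ℂ H} {v n : V} (hv : IsHWV H α μ v) (hn : IsHWV H α' ν n)
    (h : n ∈ LieSubmodule.lieSpan ℂ L {v}) : casv α μ = casv α' ν := by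
  obtain ⟨N, a, a', h1, h2⟩ := exists_casimir H
  let K : LieSubmodule ℂ L V :=
    { (LinearMap.ker (cas a a' V - (casv α μ) • LinearMap.id)) with
      lie_mem := by
        intro x m hm
        simp only [AddSubsemigroup.mem_carrier, AddSubmonoid.mem_toSubsemigroup,
          Submodule.mem_toAddSubmonoid, LinearMap.mem_ker, LinearMap.sub_apply,
          LinearMap.smul_apply, LinearMap.id_apply] at hm ⊢
        rw [cas_lie h1, ← lie_smul, ← lie_sub, hm, lie_zero] }
  have hK : LieSubmodule.lieSpan ℂ L {v} ≤ K := by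
    rw [LieSubmodule.lieSpan_le]
    simp only [Set.singleton_subset_iff]
    change v ∈ LinearMap.ker (cas a a' V - (casv α μ) • LinearMap.id)
    rw [LinearMap.mem_ker, LinearMap.sub_apply, h2 r α hb V μ v hv]
    simp [casv]
  have h3 : n ∈ LinearMap.ker (cas a a' V - (casv α μ) • LinearMap.id) := hK h
  rw [LinearMap.mem_ker, LinearMap.sub_apply, h2 r' α' hb' V ν n hn] at h3
  have h4 : (casv α' ν - casv α μ) • n = 0 := by
    rw [sub_smul]; exact h3
  rcases smul_eq_zero.mp h4 with h5 | h5
  · exact (sub_eq_zero.mp h5).symm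
  · exact absurd h5 hn.1

theorem thmA [FiniteDimensional ℂ V] (hb : IsBase H α) {hc : Fin r → H}
    (hco : ∀ j, IsCoroot H (α j) (hc j)) {μ : Module.Dual ℂ H} {v : V} (hv : IsHWV H α μ v)
    {N : LieSubmodule ℂ L V} (hN : N ≤ LieSubmodule.lieSpan ℂ L {v}) :
    N = ⊥ ∨ v ∈ N := by
  by_cases h0 : N = ⊥
  · exact Or.inl h0
  right
  obtain ⟨ν, n, hnN, hn⟩ := exists_hwv_sub hb h0
  have h1 := casv_eq hb hb hv hn (hN hnN)
  rcases hull_weight hb.indep hv.2.1 hn.2.1 hn.1 (lieSpan_le_hull hb hv (hN hnN)) with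
    ⟨k, hk, hk2⟩ | ⟨-, h3⟩
  · exact absurd (strict hb hco (hwv_dom hb hco hv) (hwv_dom hb hco hn) hk2 h1) hk
  · obtain ⟨c, rfl⟩ := Submodule.mem_span_singleton.mp h3
    have hc0 : c ≠ 0 := by
      rintro rfl
      exact hn.1 (by simp)
    have := N.smul_mem c⁻¹ hnN
    rwa [smul_smul, inv_mul_cancel₀ hc0, one_smul] at this

lemma mem_posr_neg {β : Weight ℂ H L} (h : β ∈ posr α) : -β ∈ posr (-α) := by
  rw [posr, Finset.mem_filter] at h ⊢
  have h1 : β.IsNonZero := by simpa [LieSubalgebra.root] using h.1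
  refine ⟨?_, ?_⟩
  · simpa [LieSubalgebra.root] using h1
  · have := isPosRoot_neg h.2
    convert this using 1
    ext x; simp

lemma rho2_neg : rho2 (-α) = - rho2 α := by
  rw [rho2, rho2, ← Finset.sum_neg_distrib]
  refine Finset.sum_nbij' (fun β => -β) (fun β => -β) ?_ ?_ ?_ ?_ ?_
  · intro β hβ
    simpa using mem_posr_neg hβ
  · intro β hβ
    exact mem_posr_neg hβ
  · intro β _; simp
  · intro β _; simp
  · intro β _
    ext x
    simp

lemma casv_neg (μ : Module.Dual ℂ H) : casv (-α) (-μ) = casv α μ := by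
  have h1 : tt (-μ) = - tt μ := map_neg _ _
  have h2 : tt (- rho2 α) = - tt (rho2 α) := map_neg _ _
  rw [casv, casv, rho2_neg, h1, h2]
  simp

/-- The lowest weight vector lies in the Cartan component. -/
lemma low_mem [FiniteDimensional ℂ V] (hb : IsBase H α) {hc : Fin r → H}
    (hco : ∀ j, IsCoroot H (α j) (hc j)) {μ : Module.Dual ℂ H} {w u : V} (hw : IsHWV H α μ w)
    (hu : IsHWV H (-α) (-μ) u) (hull_top : hull (-α) (-μ) u = ⊤) :
    u ∈ LieSubmodule.lieSpan ℂ L {w} := by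
  have hb' := isBase_neg hb
  have hco' : ∀ j, IsCoroot H ((-α) j) ((-hc) j) := fun j => isCoroot_neg (hco j)
  have hne : LieSubmodule.lieSpan ℂ L {w} ≠ ⊥ := by
    intro h
    rw [LieSubmodule.lieSpan_eq_bot_iff] at h
    exact hw.1 (h w rfl)
  obtain ⟨ν, m, hm, hmv⟩ := exists_hwv_sub hb' hne
  have h1 := casv_eq hb hb' hw hmv hm
  rw [← casv_neg] at h1
  rcases hull_weight hb'.indep hu.2.1 hmv.2.1 hmv.1 (hull_top ▸ Submodule.mem_top) with
    ⟨k, hk, hk2⟩ | ⟨-, h3⟩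
  · exact absurd (strict hb' hco' (hwv_dom hb' hco' hu) (hwv_dom hb' hco' hmv) hk2 h1) hk
  · obtain ⟨c, rfl⟩ := Submodule.mem_span_singleton.mp h3
    have hc0 : c ≠ 0 := by
      rintro rfl
      exact hmv.1 (by simp)
    have := (LieSubmodule.lieSpan ℂ L {w}).smul_mem c⁻¹ hm
    rwa [smul_smul, inv_mul_cancel₀ hc0, one_smul] at this

variable {W : Type} [AddCommGroup W] [Module ℂ W] [LieRingModule L W] [LieModule ℂ L W]

instance prodLRM : LieRingModule L (V × W) where
  bracket x m := (⁅x, m.1⁆, ⁅x, m.2⁆)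
  add_lie x y m := by ext <;> simp
  lie_add x m n := by ext <;> simp
  leibniz_lie x y m := by ext <;> exact leibniz_lie _ _ _

lemma prod_lie (x : L) (m : V × W) : ⁅x, m⁆ = (⁅x, m.1⁆, ⁅x, m.2⁆) := rfl

instance prodLM : LieModule ℂ L (V × W) where
  smul_lie t x m := by simp [prod_lie]
  lie_smul t x m := by simp [prod_lie]

/-- embedding of an irreducible module -/
lemma exists_embed [FiniteDimensional ℂ V] [FiniteDimensional ℂ W] (hb : IsBase H α)
    {hc : Fin r → H} (hco : ∀ j, IsCoroot H (α j) (hc j)) {μ : Module.Dual ℂ H}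
    (hs : IsSimpleOrder (LieSubmodule ℂ L V)) {v : V} (hv : IsHWV H α μ v) {w : W}
    (hw : IsHWV H α μ w) :
    ∃ ι : V →ₗ[ℂ] W, (∀ (x : L) (a : V), ι ⁅x, a⁆ = ⁅x, ι a⁆) ∧ ι v = w := by
  have hvw : IsHWV H α μ (v, w) := by
    refine ⟨fun h => hv.1 (congrArg Prod.fst h), fun x => ?_, fun χ hχ e he => ?_⟩
    · rw [prod_lie]; simp only; rw [hv.2.1, hw.2.1]; rfl
    · rw [prod_lie]; simp only; rw [hv.2.2 χ hχ e he, hw.2.2 χ hχ e he]; rfl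
  set D : LieSubmodule ℂ L (V × W) := LieSubmodule.lieSpan ℂ L {(v, w)} with hD
  have hmem : (v, w) ∈ D := LieSubmodule.subset_lieSpan rfl
  let K : LieSubmodule ℂ L (V × W) :=
    { (D.toSubmodule ⊓ LinearMap.ker (LinearMap.fst ℂ V W)) with
      lie_mem := by
        intro x m hm
        have hm' : m ∈ D.toSubmodule ⊓ LinearMap.ker (LinearMap.fst ℂ V W) := hm
        change ⁅x, m⁆ ∈ D.toSubmodule ⊓ LinearMap.ker (LinearMap.fst ℂ V W)
        rw [Submodule.mem_inf, LinearMap.mem_ker] at hm' ⊢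
        refine ⟨D.lie_mem hm'.1, ?_⟩
        have : m.1 = 0 := hm'.2
        rw [LinearMap.fst_apply, prod_lie]
        simp [this] }
  have hK : K ≤ D := fun m hm => (Submodule.mem_inf.mp hm).1
  have hK0 : K = ⊥ := by
    rcases thmA hb hco hvw hK with h | h
    · exact h
    · exact absurd (Submodule.mem_inf.mp h).2 (by simpa using hv.1)
  let p : D.toSubmodule →ₗ[ℂ] V := LinearMap.fst ℂ V W ∘ₗ D.toSubmodule.subtype
  have hinj : Function.Injective p := by
    rw [← LinearMap.ker_eq_bot, LinearMap.ker_eq_bot']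
    intro m hm
    have h1 : m.1 ∈ K := Submodule.mem_inf.mpr ⟨m.2, hm⟩
    rw [hK0] at h1
    exact Subtype.ext (by simpa using h1)
  let R : LieSubmodule ℂ L V :=
    { (LinearMap.range p) with
      lie_mem := by
        rintro x m ⟨d, rfl⟩
        exact ⟨⟨⁅x, d.1⁆, D.lie_mem d.2⟩, rfl⟩ }
  have hvR : v ∈ R := ⟨⟨(v, w), hmem⟩, rfl⟩
  have hR : R = ⊤ := by
    rcases hs.eq_bot_or_eq_top R with h | h
    · rw [h] at hvR
      exact absurd (by simpa using hvR) hv.1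
    · exact h
  have hsurj : Function.Surjective p := by
    intro a
    have : a ∈ R := by rw [hR]; trivial
    exact this
  let E := LinearEquiv.ofBijective p ⟨hinj, hsurj⟩
  refine ⟨LinearMap.snd ℂ V W ∘ₗ D.toSubmodule.subtype ∘ₗ E.symm.toLinearMap, ?_, ?_⟩
  · intro x a
    obtain ⟨d, rfl⟩ := E.surjective a
    have h1 : ⁅x, E d⁆ = E ⟨⁅x, d.1⁆, D.lie_mem d.2⟩ := rfl
    rw [h1]
    simp only [LinearMap.comp_apply, LinearEquiv.coe_coe, LinearEquiv.symm_apply_apply]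
    rfl
  · have h1 : v = E ⟨(v, w), hmem⟩ := rfl
    simp only [LinearMap.comp_apply, LinearEquiv.coe_coe]
    rw [h1, LinearEquiv.symm_apply_apply]
    rfl

end ThmA

section Forms

variable {V : Type} [AddCommGroup V] [Module ℂ V] [LieRingModule L V] [LieModule ℂ L V]

lemma lieSpan_top (hs : IsSimpleOrder (LieSubmodule ℂ L V)) {v : V} (hv : v ≠ 0) :
    LieSubmodule.lieSpan ℂ L {v} = ⊤ := by
  rcases hs.eq_bot_or_eq_top (LieSubmodule.lieSpan ℂ L {v}) with h | h
  · rw [LieSubmodule.lieSpan_eq_bot_iff] at h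
    exact absurd (h v rfl) hv
  · exact h

lemma simple_ind (hs : IsSimpleOrder (LieSubmodule ℂ L V)) {p : Submodule ℂ V}
    (hp : ∀ (x : L), ∀ m ∈ p, ⁅x, m⁆ ∈ p) {v : V} (hv : v ≠ 0) (hvp : v ∈ p) (a : V) : a ∈ p := by
  let N : LieSubmodule ℂ L V := { p with lie_mem := fun {x m} hm => hp x m hm }
  have h1 : LieSubmodule.lieSpan ℂ L {v} ≤ N := by
    rw [LieSubmodule.lieSpan_le]
    rintro x rfl
    exact hvp
  rw [lieSpan_top hs hv] at h1
  exact h1 (by trivial)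

/-- invariance of a bilinear form -/
def InvForm (L : Type) [LieRing L] [LieAlgebra ℂ L] {V : Type} [AddCommGroup V] [Module ℂ V]
    [LieRingModule L V] (B : V →ₗ[ℂ] V →ₗ[ℂ] ℂ) : Prop :=
  ∀ (x : L) (v w : V), B ⁅x, v⁆ w + B v ⁅x, w⁆ = 0

lemma form_nondeg (hs : IsSimpleOrder (LieSubmodule ℂ L V)) {B : V →ₗ[ℂ] V →ₗ[ℂ] ℂ}
    (hB : InvForm L B) {a b : V} (hab : B a b ≠ 0) (v : V) (hv : ∀ w, B v w = 0) : v = 0 := by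
  by_contra h0
  have := simple_ind hs (p := LinearMap.ker B) (by
    intro x m hm
    rw [LinearMap.mem_ker] at hm ⊢
    ext w
    have := hB x m w
    rw [hm] at this
    simpa using this) h0 (by rw [LinearMap.mem_ker]; ext w; simpa using hv w) a
  rw [LinearMap.mem_ker] at this
  rw [this] at hab
  simp at hab

lemma form_unique [FiniteDimensional ℂ V] (hs : IsSimpleOrder (LieSubmodule ℂ L V))
    {B B' : V →ₗ[ℂ] V →ₗ[ℂ] ℂ} (hB : InvForm L B) (hB' : InvForm L B')
    (hnd : ∀ v, (∀ w, B v w = 0) → v = 0) : ∃ c : ℂ, ∀ a b, B' a b = c * B a b := by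
  have hnt : Nontrivial V := by
    have := hs.toNontrivial
    by_contra hcon
    rw [not_nontrivial_iff_subsingleton] at hcon
    exact not_subsingleton (LieSubmodule ℂ L V) ((LieSubmodule.subsingleton_iff ℂ L V).mpr hcon)
  have hinj : Function.Injective B := by
    rw [← LinearMap.ker_eq_bot, LinearMap.ker_eq_bot']
    intro m hm
    exact hnd m fun w => by rw [hm]; rfl
  let E : V ≃ₗ[ℂ] Module.Dual ℂ V :=
    LinearMap.linearEquivOfInjective B hinj (Subspace.dual_finrank_eq).symm
  have hE : ∀ a, E a = B a := fun a => rfl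
  obtain ⟨c, hc⟩ := Module.End.exists_eigenvalue (E.symm.toLinearMap ∘ₗ B')
  obtain ⟨m, hm⟩ := hc.exists_hasEigenvector
  have hm1 : B' m = c • B m := by
    have h1 := hm.apply_eq_smul
    have h2 := congrArg E h1
    rw [LinearMap.comp_apply, LinearEquiv.coe_coe, LinearEquiv.apply_symm_apply, map_smul] at h2
    exact h2
  refine ⟨c, fun a b => ?_⟩
  have := simple_ind hs (p := LinearMap.ker (B' - c • B)) (by
    intro x m hm
    rw [LinearMap.mem_ker] at hm ⊢
    ext w
    have h1 := hB x m w
    have h2 := hB' x m w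
    have h3 := LinearMap.congr_fun hm ⁅x, w⁆
    simp only [LinearMap.sub_apply, LinearMap.smul_apply, smul_eq_mul, LinearMap.zero_apply]
      at h3 ⊢
    linear_combination h2 - c * h1 - h3) hm.2 (by rw [LinearMap.mem_ker]; simp [hm1]) a
  rw [LinearMap.mem_ker] at this
  have h3 := LinearMap.congr_fun this b
  simp only [LinearMap.sub_apply, LinearMap.smul_apply, smul_eq_mul, LinearMap.zero_apply] at h3
  linear_combination h3

lemma form_sign [FiniteDimensional ℂ V] (hs : IsSimpleOrder (LieSubmodule ℂ L V))
    {B : V →ₗ[ℂ] V →ₗ[ℂ] ℂ} (hB : InvForm L B)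
    (hnd : ∀ v, (∀ w, B v w = 0) → v = 0) :
    ∃ ε : ℂ, (ε = 1 ∨ ε = -1) ∧ ∀ a b, B a b = ε * B b a := by
  obtain ⟨c, hc⟩ := form_unique hs hB (B' := B.flip) (fun x v w => by
    have := hB x w v
    simp only [LinearMap.flip_apply]
    rw [add_comm]; exact this) hnd
  simp only [LinearMap.flip_apply] at hc
  refine ⟨c, ?_, fun a b => hc b a⟩
  by_cases h : ∃ a b, B a b ≠ 0
  · obtain ⟨a, b, hab⟩ := h
    have h1 : B a b = c * (c * B a b) := by rw [← hc a b, ← hc b a]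
    have h2 : (c - 1) * (c + 1) = 0 := by
      have : B a b * ((c - 1) * (c + 1)) = 0 := by linear_combination -h1
      rcases mul_eq_zero.mp this with h | h
      · exact absurd h hab
      · exact h
    rcases mul_eq_zero.mp h2 with h | h
    · left; linear_combination h
    · right; linear_combination h
  · push Not at h
    have hnt := hs.toNontrivial
    exfalso
    have : Subsingleton V := ⟨fun a b => by rw [hnd a (h a), hnd b (h b)]⟩
    exact not_subsingleton (LieSubmodule ℂ L V) ((LieSubmodule.subsingleton_iff ℂ L V).mpr this)

variable [FiniteDimensional ℂ L] [IsKilling ℂ L]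
variable {H : LieSubalgebra ℂ L} [H.IsCartanSubalgebra]
variable {r : ℕ} {α : Fin r → Module.Dual ℂ H}

lemma exists_low [FiniteDimensional ℂ V] (hb : IsBase H α)
    (hs : IsSimpleOrder (LieSubmodule ℂ L V)) {B : V →ₗ[ℂ] V →ₗ[ℂ] ℂ} (hB : InvForm L B)
    (hnd : ∀ v, (∀ w, B v w = 0) → v = 0) {ε : ℂ} (hε : ∀ a b, B a b = ε * B b a)
    {μ : Module.Dual ℂ H} {v : V} (hv : IsHWV H α μ v) :
    ∃ u : V, IsHWV H (-α) (-μ) u ∧ B v u ≠ 0 ∧ hull (-α) (-μ) u = ⊤ := by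
  have hnt : Nontrivial V := ⟨v, 0, hv.1⟩
  obtain ⟨ν, u, hu⟩ := exists_hwv (V := V) (isBase_neg hb)
  have hvu : B v u ≠ 0 := by
    intro h0
    have h1 := cyclic hb hv (p := LinearMap.ker (B.flip u)) (by simpa using h0) (by
      intro χ hχ f hf m hm
      rw [LinearMap.mem_ker, LinearMap.flip_apply]
      have := hB f m u
      rw [hu.2.2 χ hχ f hf, map_zero, add_zero] at this
      exact this)
    rw [lieSpan_top hs hv.1] at h1
    apply hu.1
    apply hnd
    intro w
    have h2 : w ∈ LinearMap.ker (B.flip u) := h1 (by trivial)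
    rw [LinearMap.mem_ker, LinearMap.flip_apply] at h2
    rw [hε, h2, mul_zero]
  have hν : ν = -μ := by
    ext h
    have := hB h v u
    rw [hv.2.1, hu.2.1, map_smul, map_smul, LinearMap.smul_apply, smul_eq_mul, smul_eq_mul,
      ← add_mul] at this
    rcases mul_eq_zero.mp this with h1 | h1
    · rw [LinearMap.neg_apply]; linear_combination h1
    · exact absurd h1 hvu
  subst hν
  refine ⟨u, hu, hvu, ?_⟩
  have h1 := lieSpan_le_hull (isBase_neg hb) hu
  rw [lieSpan_top hs hu.1] at h1
  rw [eq_top_iff]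
  exact fun x _ => h1 (by trivial)

end Forms

section Data

variable [FiniteDimensional ℂ L] [IsKilling ℂ L]
variable {H : LieSubalgebra ℂ L} [H.IsCartanSubalgebra]
variable {r : ℕ} {α : Fin r → Module.Dual ℂ H}

/-- The data built inductively. -/
def Good (H : LieSubalgebra ℂ L) [H.IsCartanSubalgebra] (α ϖ : Fin r → Module.Dual ℂ H)
    (n : Fin r → ℕ) : Prop :=
  ∃ (W : Type) (_ : AddCommGroup W) (_ : Module ℂ W) (_ : LieRingModule L W)
    (_ : LieModule ℂ L W) (_ : FiniteDimensional ℂ W) (B : W →ₗ[ℂ] W →ₗ[ℂ] ℂ) (ε : ℂ)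
    (w u : W) (ρ : Fin r → L →ₗ[ℂ] Module.End ℂ W),
    (ε = 1 ∨ ε = -1) ∧ (∀ a b, B a b = ε * B b a) ∧ InvForm L B ∧
    IsHWV H α (cmb ϖ n) w ∧ IsHWV H (-α) (-(cmb ϖ n)) u ∧ B w u ≠ 0 ∧
    hull (-α) (-(cmb ϖ n)) u = ⊤ ∧
    (∀ j (z x : L) (a : W), ⁅z, ρ j x a⁆ - ρ j x ⁅z, a⁆ = ρ j ⁅z, x⁆ a) ∧
    (∀ j (x : L) (a b : W), B (ρ j x a) b = - B a (ρ j x b)) ∧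
    (∀ j (h : H), ρ j (h : L) w = ((n j : ℂ) * ϖ j h) • w)

lemma good_zero (ϖ : Fin r → Module.Dual ℂ H) : Good H α ϖ 0 := by
  let i1 : LieRingModule L ℂ :=
    { bracket := fun _ _ => 0
      add_lie := fun x y m => (add_zero (0:ℂ)).symm
      lie_add := fun x m n => (add_zero (0:ℂ)).symm
      leibniz_lie := fun x y m => (add_zero (0:ℂ)).symm }
  have hl : ∀ (x : L) (m : ℂ), ⁅x, m⁆ = 0 := fun _ _ => rfl
  let i2 : LieModule ℂ L ℂ :=
    { smul_lie := fun t x m => by simp [hl]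
      lie_smul := fun t x m => by simp [hl] }
  refine ⟨ℂ, inferInstance, inferInstance, i1, i2, inferInstance, LinearMap.mul ℂ ℂ, 1, 1, 1, 0,
    Or.inl rfl, ?_, ?_, ?_, ?_, ?_, ?_, ?_, ?_, ?_⟩
  · intro a b; simp [mul_comm]
  · intro x a b; simp [hl]
  · exact ⟨one_ne_zero, fun x => by simp [hl], fun _ _ _ _ => hl _ _⟩
  · exact ⟨one_ne_zero, fun x => by simp [hl], fun _ _ _ _ => hl _ _⟩
  · simp
  · rw [hull, eq_top_iff]
    refine le_sup_of_le_left ?_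
    intro x _
    exact Submodule.mem_span_singleton.mpr ⟨x, by simp⟩
  · intro j z x a; simp [hl]
  · intro j x a b; simp
  · intro j h; simp

variable {V : Type} [AddCommGroup V] [Module ℂ V] [LieRingModule L V] [LieModule ℂ L V]
variable {W : Type} [AddCommGroup W] [Module ℂ W] [LieRingModule L W] [LieModule ℂ L W]

lemma tmul_wt {μ ν : Module.Dual ℂ H} {a : V} {b : W} (ha : a ∈ wt H V μ) (hb : b ∈ wt H W ν) :
    a ⊗ₜ[ℂ] b ∈ wt H (V ⊗[ℂ] W) (μ + ν) := by
  intro x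
  rw [TensorProduct.LieModule.lie_tmul_right, ha x, hb x]
  simp [TensorProduct.smul_tmul', add_smul]

lemma hull_le {μ : Module.Dual ℂ H} {v : V} {p : Submodule ℂ V} (h1 : v ∈ p)
    (h2 : ∀ k : Fin r → ℕ, k ≠ 0 → wt H V (μ - cmb α k) ≤ p) : hull α μ v ≤ p :=
  sup_le (by rw [Submodule.span_le]; simpa using h1) (iSup_le fun k => h2 k.1 k.2)

lemma hull_tensor {μ ν : Module.Dual ℂ H} {v : V} {w : W} (hv : v ∈ wt H V μ)
    (hw : w ∈ wt H W ν) (h1 : hull α μ v = ⊤) (h2 : hull α ν w = ⊤) :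
    hull α (μ + ν) (v ⊗ₜ[ℂ] w) = ⊤ := by
  have key : ∀ a b, a ⊗ₜ[ℂ] b ∈ hull α (μ + ν) (v ⊗ₜ[ℂ] w) := by
    have e1 : ∀ (k l : Fin r → ℕ) (hkl : k + l ≠ 0) (a : V) (b : W)
        (ha : a ∈ wt H V (μ - cmb α k)) (hb : b ∈ wt H W (ν - cmb α l)),
        a ⊗ₜ[ℂ] b ∈ hull α (μ + ν) (v ⊗ₜ[ℂ] w) := by
      intro k l hkl a b ha hb
      refine mem_hull_wt _ _ _ hkl ?_
      have := tmul_wt ha hb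
      convert this using 1
      rw [cmb_add, add_sub_add_comm]
    have hv' : v ∈ wt H V (μ - cmb α 0) := by simpa using hv
    have hw' : w ∈ wt H W (ν - cmb α 0) := by simpa using hw
    intro a b
    have ha : a ∈ hull α μ v := h1 ▸ Submodule.mem_top
    have hb : b ∈ hull α ν w := h2 ▸ Submodule.mem_top
    have s1 : ∀ b, v ⊗ₜ[ℂ] b ∈ hull α (μ + ν) (v ⊗ₜ[ℂ] w) := by
      intro b
      have hb : b ∈ hull α ν w := h2 ▸ Submodule.mem_top
      refine (hull_le (p := (hull α (μ + ν) (v ⊗ₜ[ℂ] w)).comap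
        (TensorProduct.mk ℂ V W v)) ?_ ?_) hb
      · exact Submodule.mem_sup_left (Submodule.mem_span_singleton_self _)
      · intro k hk b hb
        exact e1 0 k (by simpa using hk) v b hv' hb
    have s2 : ∀ k : Fin r → ℕ, k ≠ 0 → ∀ a ∈ wt H V (μ - cmb α k), ∀ b,
        a ⊗ₜ[ℂ] b ∈ hull α (μ + ν) (v ⊗ₜ[ℂ] w) := by
      intro k hk a ha b
      have hb : b ∈ hull α ν w := h2 ▸ Submodule.mem_top
      refine (hull_le (p := (hull α (μ + ν) (v ⊗ₜ[ℂ] w)).comap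
        (TensorProduct.mk ℂ V W a)) ?_ ?_) hb
      · exact e1 k 0 (by simpa using hk) a w ha hw'
      · intro l hl b hb
        refine e1 k l ?_ a b ha hb
        intro h
        apply hk
        funext j
        have := congrFun h j
        simp at this
        simp [this.1]
    refine (hull_le (p := (hull α (μ + ν) (v ⊗ₜ[ℂ] w)).comap
        ((TensorProduct.mk ℂ V W).flip b)) ?_ ?_) ha
    · exact s1 b
    · intro k hk a ha
      exact s2 k hk a ha b
  rw [eq_top_iff, ← TensorProduct.span_tmul_eq_top, Submodule.span_le]
  rintro _ ⟨a, b, rfl⟩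
  exact key a b

lemma hwv_tensor {μ ν : Module.Dual ℂ H} {v : V} {w : W} (hv : IsHWV H α μ v)
    (hw : IsHWV H α ν w) : IsHWV H α (μ + ν) (v ⊗ₜ[ℂ] w) := by
  refine ⟨?_, tmul_wt hv.2.1 hw.2.1, ?_⟩
  · intro h
    apply hv.1
    rw [← Module.forall_dual_apply_eq_zero_iff ℂ v]
    intro f
    by_contra hf
    apply hw.1
    rw [← Module.forall_dual_apply_eq_zero_iff ℂ w]
    intro g
    have h1 := congrArg (TensorProduct.lid ℂ ℂ ∘ TensorProduct.map f g) h
    simp only [Function.comp_apply, TensorProduct.map_tmul, TensorProduct.lid_tmul, smul_eq_mul,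
      map_zero] at h1
    exact (mul_eq_zero.mp h1).resolve_left hf
  · intro χ hχ e he
    rw [TensorProduct.LieModule.lie_tmul_right, hv.2.2 χ hχ e he, hw.2.2 χ hχ e he]
    simp

end Data

section Step

variable [FiniteDimensional ℂ L] [IsKilling ℂ L]
variable {H : LieSubalgebra ℂ L} [H.IsCartanSubalgebra]
variable {r : ℕ} {α : Fin r → Module.Dual ℂ H}

lemma good_step {ϖ : Fin r → Module.Dual ℂ H} (hb : IsBase H α) {n : Fin r → ℕ} (k : Fin r)
    {F : Type} [AddCommGroup F] [Module ℂ F] [LieRingModule L F] [LieModule ℂ L F]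
    [FiniteDimensional ℂ F] (hs : IsSimpleOrder (LieSubmodule ℂ L F)) {v : F}
    (hv : IsHWV H α (ϖ k) v) {C : F →ₗ[ℂ] F →ₗ[ℂ] ℂ} (hC : InvForm L C)
    (hnd : ∀ v, (∀ w, C v w = 0) → v = 0) (hn : Good H α ϖ n) :
    Good H α ϖ (Pi.single k 1 + n) := by
  obtain ⟨ε₀, hε₀, hCε⟩ := form_sign hs hC hnd
  obtain ⟨v', hv', hvv', hvtop⟩ := exists_low hb hs hC hnd hCε hv
  obtain ⟨W, _, _, _, _, _, B, ε, w, u, ρ, hε, hBε, hB, hw, hu, hwu, hutop, hρ, hρB, hρw⟩ := hn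
  have hcm : cmb ϖ (Pi.single k 1 + n) = ϖ k + cmb ϖ n := by
    rw [cmb_add]
    congr 1
    simp [cmb, Pi.single_apply]
  let B' : (F ⊗[ℂ] W) →ₗ[ℂ] (F ⊗[ℂ] W) →ₗ[ℂ] ℂ := LinearMap.BilinForm.tmul C B
  have hB' : ∀ a b c d, B' (a ⊗ₜ b) (c ⊗ₜ d) = B b d * C a c := fun a b c d => rfl
  let act : L →ₗ[ℂ] Module.End ℂ F := LinearMap.mk₂ ℂ (fun x a => ⁅x, a⁆) (fun x y a => add_lie x y a)
    (fun c x a => smul_lie c x a) (fun x a b => lie_add x a b) (fun c x a => lie_smul c x a)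
  let ρ' : Fin r → L →ₗ[ℂ] Module.End ℂ (F ⊗[ℂ] W) := fun j =>
    (LinearMap.lTensorHom F) ∘ₗ ρ j +
      (if j = k then (1:ℂ) else 0) • ((LinearMap.rTensorHom W) ∘ₗ act)
  have hρ' : ∀ j x a b, ρ' j x (a ⊗ₜ b) =
      a ⊗ₜ ρ j x b + (if j = k then (1:ℂ) else 0) • (⁅x, a⁆ ⊗ₜ[ℂ] b) := fun j x a b => rfl
  refine ⟨F ⊗[ℂ] W, inferInstance, inferInstance, inferInstance, inferInstance, inferInstance, B',
    ε₀ * ε, v ⊗ₜ w, v' ⊗ₜ u, ρ', ?_, ?_, ?_, ?_, ?_, ?_, ?_, ?_, ?_, ?_⟩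
  · rcases hε₀ with rfl | rfl <;> rcases hε with rfl | rfl <;> simp
  · intro a b
    induction a with
    | zero => simp
    | add x y hx hy => simp only [map_add, LinearMap.add_apply, hx, hy]; ring
    | tmul a₁ a₂ =>
      induction b with
      | zero => simp
      | add x y hx hy => simp only [map_add, LinearMap.add_apply, hx, hy]; ring
      | tmul b₁ b₂ =>
        rw [hB', hB', hCε a₁ b₁, hBε a₂ b₂]; ring
  · intro x a b
    induction a with
    | zero => simp
    | add x y hx hy =>
      simp only [map_add, lie_add, LinearMap.add_apply]
      linear_combination hx + hy
    | tmul a₁ a₂ =>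
      induction b with
      | zero => simp
      | add x y hx hy =>
        simp only [map_add, lie_add]
        linear_combination hx + hy
      | tmul b₁ b₂ =>
        simp only [TensorProduct.LieModule.lie_tmul_right, map_add, LinearMap.add_apply, hB']
        linear_combination B a₂ b₂ * hC x a₁ b₁ + C a₁ b₁ * hB x a₂ b₂
  · rw [hcm]; exact hwv_tensor hv hw
  · rw [hcm, neg_add]; exact hwv_tensor hv' hu
  · rw [hB']; exact mul_ne_zero hwu hvv'
  · rw [hcm, neg_add]; exact hull_tensor hv'.2.1 hu.2.1 hvtop hutop
  · intro j z x a
    induction a with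
    | zero => simp
    | add p q hp hq =>
      simp only [map_add, lie_add]
      rw [← hp, ← hq]
      module
    | tmul a b =>
      simp only [hρ', TensorProduct.LieModule.lie_tmul_right, map_add, lie_add, lie_smul,
        ← hρ j z x b, TensorProduct.tmul_sub, TensorProduct.sub_tmul, lie_lie]
      module
  · intro j x a b
    induction a with
    | zero => simp
    | add p q hp hq =>
      simp only [map_add, LinearMap.add_apply]
      linear_combination hp + hq
    | tmul a₁ a₂ =>
      induction b with
      | zero => simp
      | add p q hp hq =>
        simp only [map_add]
        linear_combination hp + hq
      | tmul b₁ b₂ =>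
        simp only [hρ', map_add, map_smul, LinearMap.add_apply, LinearMap.smul_apply, hB',
          smul_eq_mul]
        linear_combination C a₁ b₁ * hρB j x a₂ b₂ +
          (if j = k then (1:ℂ) else 0) * B a₂ b₂ * hC x a₁ b₁
  · intro j h
    rw [hρ', hρw, hv.2.1, TensorProduct.tmul_smul, ← TensorProduct.smul_tmul', smul_smul,
      ← add_smul]
    congr 1
    by_cases hj : j = k
    · subst hj
      simp
      ring
    · simp [hj]

lemma good_all {ϖ : Fin r → Module.Dual ℂ H} (hb : IsBase H α)
    (F : Fin r → Type) [∀ j, AddCommGroup (F j)] [∀ j, Module ℂ (F j)]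
    [∀ j, LieRingModule L (F j)] [∀ j, LieModule ℂ L (F j)] [∀ j, FiniteDimensional ℂ (F j)]
    (hF : ∀ j, IsHWIrrep H α (ϖ j) (F j))
    (hd : ∀ j, IsDualPair (L := L) (F j) (F j)) (N : ℕ) :
    ∀ n : Fin r → ℕ, ∑ j, n j = N → Good H α ϖ n := by
  induction N with
  | zero =>
    intro n hn
    have : n = 0 := by
      funext j
      exact (Finset.sum_eq_zero_iff.mp hn) j (Finset.mem_univ _)
    rw [this]
    exact good_zero ϖ
  | succ N ih =>
    intro n hn
    obtain ⟨k, hk⟩ : ∃ k, n k ≠ 0 := by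
      by_contra h
      push Not at h
      simp [h] at hn
    have hle : (Pi.single k 1 : Fin r → ℕ) ≤ n := by
      intro j
      by_cases hj : j = k
      · subst hj; simp; omega
      · simp [hj]
    have e : n = (Pi.single k 1 : Fin r → ℕ) + (n - (Pi.single k 1 : Fin r → ℕ)) := (add_tsub_cancel_of_le hle).symm
    have hsum : ∑ j, (n - (Pi.single k 1 : Fin r → ℕ)) j = N := by
      have h1 := hn
      rw [e] at h1
      simp only [Pi.add_apply, Finset.sum_add_distrib, Finset.sum_pi_single',
        Finset.mem_univ, if_true] at h1
      have h2 : ∑ j, (Pi.single k 1 : Fin r → ℕ) j = 1 := by simp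
      omega
    obtain ⟨hs, v, hv0, hv1, hv2⟩ := hF k
    obtain ⟨C, hC1, -, hC2⟩ := hd k
    rw [e]
    exact good_step hb k hs (v := v) ⟨hv0, hv1, hv2⟩ hC2 hC1 (ih _ hsum)

end Step

section VData

variable [FiniteDimensional ℂ L] [IsKilling ℂ L]
variable {H : LieSubalgebra ℂ L} [H.IsCartanSubalgebra]
variable {r : ℕ} {α : Fin r → Module.Dual ℂ H}

lemma hc_span (hb : IsBase H α) {hc : Fin r → H} {ϖ : Fin r → Module.Dual ℂ H}
    (hϖ : ∀ j k, ϖ j (hc k) = if j = k then (1 : ℂ) else 0) :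
    Submodule.span ℂ (Set.range hc) = ⊤ := by
  have h1 : Submodule.span ℂ (Set.range α) = ⊤ := by
    rw [eq_top_iff, ← IsKilling.span_weight_isNonZero_eq_top ℂ L H, Submodule.span_le]
    rintro _ ⟨β, hβ, rfl⟩
    have hr : IsRoot H (Weight.toLinear ℂ H L β) :=
      ⟨by simpa using hβ, β.genWeightSpace_ne_bot⟩
    have hm : ∀ c : Fin r → ℕ, ∑ j, (c j : ℂ) • α j ∈ Submodule.span ℂ (Set.range α) := fun c =>
      Submodule.sum_mem _ fun j _ => Submodule.smul_mem _ _ (Submodule.subset_span ⟨j, rfl⟩)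
    rcases hb.pos_neg _ hr with ⟨c, h⟩ | ⟨c, h⟩
    · rw [h]; exact hm c
    · rw [h]; exact Submodule.neg_mem _ (hm c)
  have h2 : r = finrank ℂ H := by
    have := finrank_eq_card_basis (Basis.mk hb.indep h1.ge)
    rw [Subspace.dual_finrank_eq, Fintype.card_fin] at this
    exact this.symm
  have h3 : LinearIndependent ℂ hc := by
    rw [Fintype.linearIndependent_iff]
    intro g hg i
    have := congrArg (ϖ i) hg
    simpa [hϖ] using this
  exact h3.span_eq_top_of_card_eq_finrank' (by simpa using h2)

lemma dual_ext (hb : IsBase H α) {hc : Fin r → H} {ϖ : Fin r → Module.Dual ℂ H}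
    (hϖ : ∀ j k, ϖ j (hc k) = if j = k then (1 : ℂ) else 0) {f g : Module.Dual ℂ H}
    (h : ∀ k, f (hc k) = g (hc k)) : f = g := by
  apply LinearMap.ext_on_range (hc_span hb hϖ)
  exact h

/-- invariance of a trilinear form -/
def InvTri (L : Type) [LieRing L] [LieAlgebra ℂ L] {V : Type} [AddCommGroup V] [Module ℂ V]
    [LieRingModule L V] (t : L →ₗ[ℂ] V →ₗ[ℂ] V →ₗ[ℂ] ℂ) : Prop :=
  ∀ (z x : L) (a b : V), t ⁅z, x⁆ a b + t x ⁅z, a⁆ b + t x a ⁅z, b⁆ = 0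

variable {V : Type} [AddCommGroup V] [Module ℂ V] [LieRingModule L V] [LieModule ℂ L V]

lemma exists_data [FiniteDimensional ℂ V] {ϖ : Fin r → Module.Dual ℂ H} (hb : IsBase H α)
    {hc : Fin r → H} (hco : ∀ j, IsCoroot H (α j) (hc j))
    (hϖ : ∀ j k, ϖ j (hc k) = if j = k then (1 : ℂ) else 0)
    (F : Fin r → Type) [∀ j, AddCommGroup (F j)] [∀ j, Module ℂ (F j)]
    [∀ j, LieRingModule L (F j)] [∀ j, LieModule ℂ L (F j)] [∀ j, FiniteDimensional ℂ (F j)]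
    (hF : ∀ j, IsHWIrrep H α (ϖ j) (F j))
    (hd : ∀ j, IsDualPair (L := L) (F j) (F j)) {μ : Module.Dual ℂ H} (hμ : IsDomInt hc μ)
    (hs : IsSimpleOrder (LieSubmodule ℂ L V)) {v : V} (hv : IsHWV H α μ v) :
    ∃ (B : V →ₗ[ℂ] V →ₗ[ℂ] ℂ) (ε : ℂ) (t : Fin r → L →ₗ[ℂ] V →ₗ[ℂ] V →ₗ[ℂ] ℂ),
      (ε = 1 ∨ ε = -1) ∧ (∀ a b, B a b = ε * B b a) ∧ InvForm L B ∧
      (∀ v, (∀ w, B v w = 0) → v = 0) ∧ (∀ j, InvTri L (t j)) ∧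
      (∀ j x a b, t j x b a = -ε * t j x a b) ∧
      ∀ j (h : H) b, t j (h : L) v b = μ (hc j) * ϖ j h * B v b := by
  choose n hn using hμ
  have hμn : μ = cmb ϖ n := by
    apply dual_ext hb hϖ
    intro k
    rw [hn, cmb, LinearMap.sum_apply]
    simp [hϖ]
  obtain ⟨W, _, _, _, _, _, B, ε, w, u, ρ, hε, hBε, hB, hw, hu, hwu, hutop, hρ, hρB, hρw⟩ :=
    good_all hb F hF hd _ n rfl
  rw [← hμn] at hw hu hutop
  obtain ⟨ι, hι, hιv⟩ := exists_embed hb hco hs hv hw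
  let R : LieSubmodule ℂ L W :=
    { LinearMap.range ι with
      lie_mem := by
        rintro x _ ⟨a, rfl⟩
        exact ⟨⁅x, a⁆, hι x a⟩ }
  have hR : LieSubmodule.lieSpan ℂ L {w} ≤ R := by
    rw [LieSubmodule.lieSpan_le]
    rintro x rfl
    exact ⟨v, hιv⟩
  obtain ⟨u', hu'⟩ : ∃ u', ι u' = u := hR (low_mem hb hco hw hu hutop)
  have hinv : InvForm L (B.compl₁₂ ι ι) := by
    intro x a b
    simp only [LinearMap.compl₁₂_apply, hι]
    exact hB x _ _
  let t : Fin r → L →ₗ[ℂ] V →ₗ[ℂ] V →ₗ[ℂ] ℂ := fun j =>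
    { toFun := fun x => B.compl₁₂ (ρ j x ∘ₗ ι) ι
      map_add' := fun x y => by ext a b; simp
      map_smul' := fun c x => by ext a b; simp }
  have ht : ∀ j x a b, t j x a b = B (ρ j x (ι a)) (ι b) := fun j x a b => rfl
  refine ⟨B.compl₁₂ ι ι, ε, t, hε, fun a b => hBε _ _, hinv, ?_, ?_, ?_, ?_⟩
  · refine form_nondeg hs hinv (a := v) (b := u') ?_
    rw [LinearMap.compl₁₂_apply, hιv, hu']
    exact hwu
  · intro j z x a b
    rw [ht, ht, ht, ← hρ, hι, hι, map_sub, LinearMap.sub_apply]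
    linear_combination hB z (ρ j x (ι a)) (ι b)
  · intro j x a b
    rw [ht, ht, hρB, hBε]
    ring
  · intro j h b
    rw [ht, hιv, hρw, map_smul, LinearMap.smul_apply, smul_eq_mul, hn, LinearMap.compl₁₂_apply,
      hιv]

end VData

section Tri

variable [FiniteDimensional ℂ L] [IsKilling ℂ L]
variable {H : LieSubalgebra ℂ L} [H.IsCartanSubalgebra]
variable {r : ℕ} {α : Fin r → Module.Dual ℂ H}
variable {V : Type} [AddCommGroup V] [Module ℂ V] [LieRingModule L V] [LieModule ℂ L V]

lemma tri_inj (hb : IsBase H α) (hs : IsSimpleOrder (LieSubmodule ℂ L V))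
    {μ : Module.Dual ℂ H} {v u : V} (hv : IsHWV H α μ v) (hu : IsHWV H (-α) (-μ) u)
    {t : L →ₗ[ℂ] V →ₗ[ℂ] V →ₗ[ℂ] ℂ} (ht : InvTri L t) (h0 : ∀ h : H, t (h : L) v u = 0) :
    t = 0 := by
  have h1 : ∀ χ : Module.Dual ℂ H, IsRoot H χ → ∀ x ∈ rootSpace H ⇑χ, t x v u = 0 := by
    intro χ hχ x hx
    by_contra hne
    apply hχ.1
    ext h
    have e1 := ht h x v u
    have e2 : ⁅(h : L), x⁆ = χ h • x := IsKilling.lie_eq_smul_of_mem_rootSpace hx h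
    rw [e2, hv.2.1, hu.2.1] at e1
    simp only [map_smul, LinearMap.smul_apply, smul_eq_mul, LinearMap.neg_apply] at e1
    have e3 : χ h * t x v u = 0 := by linear_combination e1
    simpa [hne] using e3
  have h2 : ∀ x, t x v u = 0 := by
    intro x
    have key : (⊤ : Submodule ℂ L) ≤ LinearMap.ker ((t.flip v).flip u) := by
      rw [← decomp hb]
      refine sup_le (sup_le ?_ ?_) ?_
      · intro y hy
        exact h0 ⟨y, hy⟩
      · exact nplus_le fun χ hχ y hy => h1 χ hχ.1 y hy
      · exact nplus_le fun χ hχ y hy => h1 χ hχ.1 y hy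
    exact key (Submodule.mem_top (x := x))
  have h3 : ∀ a x, t x a u = 0 := by
    have := cyclic hb hv (p := ⨅ x, LinearMap.ker ((t x).flip u)) (by
      simp [Submodule.mem_iInf, h2]) (by
      intro χ hχ f hf m hm
      simp only [Submodule.mem_iInf, LinearMap.mem_ker, LinearMap.flip_apply] at hm ⊢
      intro x
      have e := ht f x m u
      rw [hm, hu.2.2 χ hχ f hf, map_zero] at e
      simpa using e)
    rw [lieSpan_top hs hv.1] at this
    intro a x
    have h4 := this (show a ∈ _ by trivial)
    simp only [Submodule.mem_iInf, LinearMap.mem_ker, LinearMap.flip_apply] at h4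
    exact h4 x
  ext x a b
  have := simple_ind hs (p := ⨅ x, LinearMap.ker ((t x).flip)) (by
    intro z m hm
    simp only [Submodule.mem_iInf, LinearMap.mem_ker] at hm ⊢
    intro x
    ext a
    have e := ht z x a m
    have e1 := LinearMap.congr_fun (hm ⁅z, x⁆) a
    have e2 := LinearMap.congr_fun (hm x) ⁅z, a⁆
    simp only [LinearMap.flip_apply, LinearMap.zero_apply] at e1 e2 ⊢
    rw [e1, e2] at e
    simpa using e) hu.1 (by
    simp only [Submodule.mem_iInf, LinearMap.mem_ker]
    intro x
    ext a
    exact h3 a x) b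
  simp only [Submodule.mem_iInf, LinearMap.mem_ker] at this
  exact LinearMap.congr_fun (this x) a

lemma tri_van [FiniteDimensional ℂ V] (hb : IsBase H α) {hc : Fin r → H}
    (hco : ∀ j, IsCoroot H (α j) (hc j))
    {μ : Module.Dual ℂ H} {v u : V} (hv : IsHWV H α μ v) (hu : IsHWV H (-α) (-μ) u)
    {t : L →ₗ[ℂ] V →ₗ[ℂ] V →ₗ[ℂ] ℂ} (ht : InvTri L t) {i : Fin r} (h0 : μ (hc i) = 0) :
    t (hc i : L) v u = 0 := by
  obtain ⟨h2, e, he, f, hf, hef⟩ := hco i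
  have k1 : ⁅f, v⁆ = 0 := hwv_kill hb h2 he hf hef hv h0
  have k2 : ⁅e, u⁆ = 0 := by
    refine hwv_kill (isBase_neg hb) (t := -hc i) (i := i) (e := f) (f := e) (by simpa using h2)
      (by simpa using hf) (by simpa using he) ?_ hu (by simpa using h0)
    rw [← lie_skew, ← hef]
    rfl
  have k3 : ⁅e, v⁆ = 0 := hv.2.2 _ (isPosRoot_simple hb i) e he
  have := ht e f v u
  rw [k2, k3] at this
  rw [hef]
  simpa using this

/-- invariant trilinear forms -/
def triSub (L : Type) [LieRing L] [LieAlgebra ℂ L] (V : Type) [AddCommGroup V] [Module ℂ V]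
    [LieRingModule L V] : Submodule ℂ (L →ₗ[ℂ] V →ₗ[ℂ] V →ₗ[ℂ] ℂ) where
  carrier := {t | InvTri L t}
  zero_mem' := fun z x a b => by simp
  add_mem' := by
    intro s t hs ht z x a b
    simp only [LinearMap.add_apply]
    linear_combination hs z x a b + ht z x a b
  smul_mem' := by
    intro c t ht z x a b
    simp only [LinearMap.smul_apply, smul_eq_mul]
    linear_combination c * ht z x a b

lemma invTri_sub {s t : L →ₗ[ℂ] V →ₗ[ℂ] V →ₗ[ℂ] ℂ} (hs : InvTri L s) (ht : InvTri L t) :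
    InvTri L (s - t) := by
  intro z x a b
  simp only [LinearMap.sub_apply]
  linear_combination hs z x a b - ht z x a b

lemma invTri_sum {ι : Type} [Fintype ι] {t : ι → L →ₗ[ℂ] V →ₗ[ℂ] V →ₗ[ℂ] ℂ}
    (ht : ∀ j, InvTri L (t j)) (c : ι → ℂ) : InvTri L (∑ j, c j • t j) := by
  intro z x a b
  simp only [LinearMap.sum_apply, LinearMap.smul_apply, smul_eq_mul, ← Finset.sum_add_distrib]
  refine Finset.sum_eq_zero fun j _ => ?_
  linear_combination c j * ht j z x a b

lemma mem_triSub {t : L →ₗ[ℂ] V →ₗ[ℂ] V →ₗ[ℂ] ℂ} : t ∈ triSub L V ↔ InvTri L t := Iff.rfl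

section Main

variable [FiniteDimensional ℂ V] {ϖ : Fin r → Module.Dual ℂ H} {hc : Fin r → H}
  {μ : Module.Dual ℂ H} {v u : V} {B : V →ₗ[ℂ] V →ₗ[ℂ] ℂ} {ε : ℂ}
  {t : Fin r → L →ₗ[ℂ] V →ₗ[ℂ] V →ₗ[ℂ] ℂ}

lemma tri_ext (hb : IsBase H α) (hco : ∀ j, IsCoroot H (α j) (hc j))
    (hϖ : ∀ j k, ϖ j (hc k) = if j = k then (1 : ℂ) else 0)
    (hs : IsSimpleOrder (LieSubmodule ℂ L V)) (hv : IsHWV H α μ v) (hu : IsHWV H (-α) (-μ) u)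
    {s : L →ₗ[ℂ] V →ₗ[ℂ] V →ₗ[ℂ] ℂ} (hs' : InvTri L s)
    (h0 : ∀ j, μ (hc j) ≠ 0 → s (hc j : L) v u = 0) : s = 0 := by
  apply tri_inj hb hs hv hu hs'
  have : ((s.flip v).flip u) ∘ₗ H.toSubmodule.subtype = 0 := by
    apply dual_ext hb hϖ
    intro k
    by_cases h : μ (hc k) = 0
    · exact tri_van hb hco hv hu hs' h
    · exact h0 k h
  intro h
  exact LinearMap.congr_fun this h

lemma tri_expand (hb : IsBase H α) (hco : ∀ j, IsCoroot H (α j) (hc j))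
    (hϖ : ∀ j k, ϖ j (hc k) = if j = k then (1 : ℂ) else 0)
    (hs : IsSimpleOrder (LieSubmodule ℂ L V)) (hv : IsHWV H α μ v) (hu : IsHWV H (-α) (-μ) u)
    (hBu : B v u ≠ 0) (ht : ∀ j, InvTri L (t j))
    (htv : ∀ j (h : H) b, t j (h : L) v b = μ (hc j) * ϖ j h * B v b)
    {s : L →ₗ[ℂ] V →ₗ[ℂ] V →ₗ[ℂ] ℂ} (hs' : InvTri L s) :
    s = ∑ j, (s (hc j : L) v u / (μ (hc j) * B v u)) • t j := by
  rw [← sub_eq_zero]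
  apply tri_ext hb hco hϖ hs hv hu
  · exact invTri_sub hs' (invTri_sum ht _)
  · intro k hk
    simp only [LinearMap.sub_apply, LinearMap.sum_apply, LinearMap.smul_apply, smul_eq_mul, htv,
      hϖ]
    simp
    field_simp
    ring

lemma tri_sign (hb : IsBase H α) (hco : ∀ j, IsCoroot H (α j) (hc j))
    (hϖ : ∀ j k, ϖ j (hc k) = if j = k then (1 : ℂ) else 0)
    (hs : IsSimpleOrder (LieSubmodule ℂ L V)) (hv : IsHWV H α μ v) (hu : IsHWV H (-α) (-μ) u)
    (hBu : B v u ≠ 0) (ht : ∀ j, InvTri L (t j))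
    (htv : ∀ j (h : H) b, t j (h : L) v b = μ (hc j) * ϖ j h * B v b)
    (hε : ∀ j x a b, t j x b a = -ε * t j x a b)
    {s : L →ₗ[ℂ] V →ₗ[ℂ] V →ₗ[ℂ] ℂ} (hs' : InvTri L s) (x : L) (a b : V) :
    s x b a = -ε * s x a b := by
  rw [tri_expand hb hco hϖ hs hv hu hBu ht htv hs']
  simp only [LinearMap.sum_apply, LinearMap.smul_apply, smul_eq_mul, Finset.mul_sum]
  refine Finset.sum_congr rfl fun j _ => ?_
  rw [hε]; ring

lemma tri_finrank (hb : IsBase H α) (hco : ∀ j, IsCoroot H (α j) (hc j))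
    (hϖ : ∀ j k, ϖ j (hc k) = if j = k then (1 : ℂ) else 0)
    (hs : IsSimpleOrder (LieSubmodule ℂ L V)) (hv : IsHWV H α μ v) (hu : IsHWV H (-α) (-μ) u)
    (hBu : B v u ≠ 0) (ht : ∀ j, InvTri L (t j))
    (htv : ∀ j (h : H) b, t j (h : L) v b = μ (hc j) * ϖ j h * B v b) :
    finrank ℂ (triSub L V) = (Finset.univ.filter fun j => μ (hc j) ≠ 0).card := by
  let ev : triSub L V →ₗ[ℂ] ({j // μ (hc j) ≠ 0} → ℂ) :=
    { toFun := fun s j => s.1 (hc j.1 : L) v u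
      map_add' := fun s s' => rfl
      map_smul' := fun c s => rfl }
  have hinj : Function.Injective ev := by
    intro s s' h
    apply Subtype.ext
    rw [← sub_eq_zero]
    refine tri_ext hb hco hϖ hs hv hu (invTri_sub s.2 s'.2) fun j hj => ?_
    have := congrFun h ⟨j, hj⟩
    rw [LinearMap.sub_apply, LinearMap.sub_apply, LinearMap.sub_apply, sub_eq_zero]
    exact this
  have hsurj : Function.Surjective ev := by
    intro c
    refine ⟨⟨∑ j : {j // μ (hc j) ≠ 0}, (c j / (μ (hc j.1) * B v u)) • t j.1,
      invTri_sum (fun j : {j // μ (hc j) ≠ 0} => ht j.1) _⟩, ?_⟩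
    funext k
    change (∑ j : {j // μ (hc j) ≠ 0}, (c j / (μ (hc j.1) * B v u)) • t j.1) (hc k.1 : L) v u = c k
    simp only [LinearMap.sum_apply, LinearMap.smul_apply, smul_eq_mul, htv, hϖ]
    rw [Finset.sum_eq_single k]
    · have := k.2
      simp
      field_simp
    · intro j _ hj
      have : j.1 ≠ k.1 := fun h => hj (Subtype.ext h)
      simp [this]
    · simp
  rw [(LinearEquiv.ofBijective ev ⟨hinj, hsurj⟩).finrank_eq, Module.finrank_fintype_fun_eq_card,
    Fintype.card_subtype]

end Main

end Tri

section Final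

variable [FiniteDimensional ℂ L] [IsKilling ℂ L]
variable {V : Type} [AddCommGroup V] [Module ℂ V] [LieRingModule L V] [LieModule ℂ L V]
  [FiniteDimensional ℂ V]

/-- the isomorphism given by a nondegenerate form -/
lemma exists_flat {M : Type} [AddCommGroup M] [Module ℂ M] [FiniteDimensional ℂ M]
    (B : M →ₗ[ℂ] M →ₗ[ℂ] ℂ) (hnd : ∀ v, (∀ w, B v w = 0) → v = 0) :
    ∃ E : M ≃ₗ[ℂ] Module.Dual ℂ M, ∀ a b, E a b = B a b := by
  have hinj : Function.Injective B := by
    rw [← LinearMap.ker_eq_bot, LinearMap.ker_eq_bot']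
    intro m hm
    exact hnd m fun w => by rw [hm]; rfl
  exact ⟨LinearMap.linearEquivOfInjective B hinj (Subspace.dual_finrank_eq).symm,
    fun a b => rfl⟩

lemma exists_triEquiv (B : V →ₗ[ℂ] V →ₗ[ℂ] ℂ) (hnd : ∀ v, (∀ w, B v w = 0) → v = 0) :
    ∃ E : (L ⊗[ℂ] (V ⊗[ℂ] V)) ≃ₗ[ℂ] (L →ₗ[ℂ] V →ₗ[ℂ] V →ₗ[ℂ] ℂ),
      ∀ y a b x c d, E (y ⊗ₜ (a ⊗ₜ b)) x c d = killingForm ℂ L y x * (B a c * B b d) := by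
  obtain ⟨K, hK⟩ := exists_flat (killingForm ℂ L) (fun v hv => killing_nondeg hv)
  obtain ⟨E, hE⟩ := exists_flat B hnd
  let Q := (TensorProduct.congr E E).trans (TensorProduct.dualDistribEquiv ℂ V V)
  let P := (TensorProduct.congr K Q).trans (TensorProduct.dualDistribEquiv ℂ L (V ⊗[ℂ] V))
  let C₁ : Module.Dual ℂ (L ⊗[ℂ] (V ⊗[ℂ] V)) ≃ₗ[ℂ] (L →ₗ[ℂ] (V ⊗[ℂ] V) →ₗ[ℂ] ℂ) :=
    (TensorProduct.lift.equiv (RingHom.id ℂ) L (V ⊗[ℂ] V) ℂ).symm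
  let C₂ : ((V ⊗[ℂ] V) →ₗ[ℂ] ℂ) ≃ₗ[ℂ] (V →ₗ[ℂ] V →ₗ[ℂ] ℂ) :=
    (TensorProduct.lift.equiv (RingHom.id ℂ) V V ℂ).symm
  refine ⟨(P.trans C₁).trans (LinearEquiv.congrRight C₂), ?_⟩
  intro y a b x c d
  have : P (y ⊗ₜ (a ⊗ₜ b)) (x ⊗ₜ (c ⊗ₜ d)) = killingForm ℂ L y x * (B a c * B b d) := by
    rw [← hK, ← hE, ← hE]
    rfl
  rw [← this]
  rfl

variable {B : V →ₗ[ℂ] V →ₗ[ℂ] ℂ}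
  {E : (L ⊗[ℂ] (V ⊗[ℂ] V)) ≃ₗ[ℂ] (L →ₗ[ℂ] V →ₗ[ℂ] V →ₗ[ℂ] ℂ)}

lemma tri_lie (hB : InvForm L B)
    (hE : ∀ y a b x c d, E (y ⊗ₜ (a ⊗ₜ b)) x c d = killingForm ℂ L y x * (B a c * B b d))
    (z : L) (s : L ⊗[ℂ] (V ⊗[ℂ] V)) (x : L) (c d : V) :
    E ⁅z, s⁆ x c d = -(E s ⁅z, x⁆ c d + E s x ⁅z, c⁆ d + E s x c ⁅z, d⁆) := by
  induction s with
  | zero => simp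
  | add p q hp hq =>
    simp only [lie_add, map_add, LinearMap.add_apply, hp, hq]
    ring
  | tmul y s =>
    induction s with
    | zero => simp
    | add p q hp hq =>
      simp only [TensorProduct.tmul_add, lie_add, map_add, LinearMap.add_apply] at hp hq ⊢
      rw [hp, hq]
      ring
    | tmul a b =>
      rw [TensorProduct.LieModule.lie_tmul_right, TensorProduct.LieModule.lie_tmul_right,
        TensorProduct.tmul_add]
      simp only [map_add, LinearMap.add_apply, hE, killing_inv z y x]
      linear_combination killingForm ℂ L y x * B b d * hB z a c +
        killingForm ℂ L y x * B a c * hB z b d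

lemma tri_swap
    (hE : ∀ y a b x c d, E (y ⊗ₜ (a ⊗ₜ b)) x c d = killingForm ℂ L y x * (B a c * B b d))
    (s : L ⊗[ℂ] (V ⊗[ℂ] V)) (x : L) (c d : V) :
    E (swapMap L V s) x c d = E s x d c := by
  induction s with
  | zero => simp
  | add p q hp hq => simp only [map_add, LinearMap.add_apply, hp, hq]
  | tmul y s =>
    induction s with
    | zero => simp
    | add p q hp hq =>
      simp only [TensorProduct.tmul_add, map_add, LinearMap.add_apply] at hp hq ⊢
      rw [hp, hq]
    | tmul a b =>
      have : swapMap L V (y ⊗ₜ (a ⊗ₜ b)) = y ⊗ₜ (b ⊗ₜ a) := rfl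
      rw [this, hE, hE]; ring

lemma inv_iff (hB : InvForm L B)
    (hE : ∀ y a b x c d, E (y ⊗ₜ (a ⊗ₜ b)) x c d = killingForm ℂ L y x * (B a c * B b d))
    (s : L ⊗[ℂ] (V ⊗[ℂ] V)) :
    s ∈ maxTrivSubmodule ℂ L (L ⊗[ℂ] (V ⊗[ℂ] V)) ↔ InvTri L (E s) := by
  rw [mem_maxTrivSubmodule]
  constructor
  · intro h z x a b
    have := tri_lie hB hE z s x a b
    rw [h z] at this
    simp only [map_zero, LinearMap.zero_apply] at this
    linear_combination this
  · intro h z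
    apply E.injective
    ext x a b
    rw [tri_lie hB hE z s x a b, h z x a b]
    simp

variable {H : LieSubalgebra ℂ L} [H.IsCartanSubalgebra]
variable {r : ℕ} {α : Fin r → Module.Dual ℂ H}

lemma inv_main {ϖ : Fin r → Module.Dual ℂ H} (hb : IsBase H α)
    {hc : Fin r → H} (hco : ∀ j, IsCoroot H (α j) (hc j))
    (hϖ : ∀ j k, ϖ j (hc k) = if j = k then (1 : ℂ) else 0)
    (F : Fin r → Type) [∀ j, AddCommGroup (F j)] [∀ j, Module ℂ (F j)]
    [∀ j, LieRingModule L (F j)] [∀ j, LieModule ℂ L (F j)] [∀ j, FiniteDimensional ℂ (F j)]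
    (hF : ∀ j, IsHWIrrep H α (ϖ j) (F j))
    (hd : ∀ j, IsDualPair (L := L) (F j) (F j)) {μ : Module.Dual ℂ H} (hμ : IsDomInt hc μ)
    (hs : IsSimpleOrder (LieSubmodule ℂ L V)) {v : V} (hv : IsHWV H α μ v) :
    ∃ (B : V →ₗ[ℂ] V →ₗ[ℂ] ℂ) (ε : ℂ), (ε = 1 ∨ ε = -1) ∧ (∀ a b, B a b = ε * B b a) ∧
      InvForm L B ∧ (∀ v, (∀ w, B v w = 0) → v = 0) ∧ (∃ a b, B a b ≠ 0) ∧
      (∀ s ∈ maxTrivSubmodule ℂ L (L ⊗[ℂ] (V ⊗[ℂ] V)), swapMap L V s = -ε • s) ∧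
      finrank ℂ (maxTrivSubmodule ℂ L (L ⊗[ℂ] (V ⊗[ℂ] V))).toSubmodule =
        (Finset.univ.filter fun j => μ (hc j) ≠ 0).card := by
  obtain ⟨B, ε, t, hε, hBε, hB, hnd, ht, hts, htv⟩ := exists_data hb hco hϖ F hF hd hμ hs hv
  obtain ⟨u, hu, hvu, -⟩ := exists_low hb hs hB hnd hBε hv
  obtain ⟨E, hE⟩ := exists_triEquiv (L := L) B hnd
  refine ⟨B, ε, hε, hBε, hB, hnd, ⟨v, u, hvu⟩, ?_, ?_⟩
  · intro s hs'
    rw [inv_iff hB hE] at hs'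
    apply E.injective
    ext x a b
    rw [tri_swap hE, tri_sign hb hco hϖ hs hv hu hvu ht htv hts hs', map_smul]
    rfl
  · rw [← tri_finrank hb hco hϖ hs hv hu hvu ht htv]
    have hmap : (maxTrivSubmodule ℂ L (L ⊗[ℂ] (V ⊗[ℂ] V))).toSubmodule.map
        (E : (L ⊗[ℂ] (V ⊗[ℂ] V)) →ₗ[ℂ] (L →ₗ[ℂ] V →ₗ[ℂ] V →ₗ[ℂ] ℂ)) = triSub L V := by
      ext q
      constructor
      · rintro ⟨s, hs', rfl⟩
        exact (inv_iff hB hE s).mp hs'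
      · intro hq
        refine ⟨E.symm q, (inv_iff hB hE _).mpr ?_, by simp⟩
        rw [LinearEquiv.apply_symm_apply]
        exact hq
    rw [← hmap]
    exact (LinearEquiv.finrank_map_eq E _).symm

end Final

section Squares

variable {V : Type} [AddCommGroup V] [Module ℂ V] [LieRingModule L V] [LieModule ℂ L V]

lemma inv_bot_sym
    (h : ∀ s ∈ maxTrivSubmodule ℂ L (L ⊗[ℂ] (V ⊗[ℂ] V)), swapMap L V s = -s) :
    symSquareInvariants L V = ⊥ := by
  rw [eq_bot_iff]
  rintro s ⟨h1, h2⟩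
  have h3 : swapMap L V s - s = 0 := h2
  rw [h s h1] at h3
  have h4 : (2 : ℂ) • s = 0 := by
    rw [two_smul, ← neg_eq_zero, neg_add, ← sub_eq_add_neg]; exact h3
  exact (smul_eq_zero.mp h4).resolve_left two_ne_zero

lemma inv_bot_alt
    (h : ∀ s ∈ maxTrivSubmodule ℂ L (L ⊗[ℂ] (V ⊗[ℂ] V)), swapMap L V s = s) :
    altSquareInvariants L V = ⊥ := by
  rw [eq_bot_iff]
  rintro s ⟨h1, h2⟩
  have h3 : swapMap L V s + s = 0 := h2
  rw [h s h1] at h3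
  have h4 : (2 : ℂ) • s = 0 := by rw [two_smul]; exact h3
  exact (smul_eq_zero.mp h4).resolve_left two_ne_zero

lemma inv_eq_alt
    (h : ∀ s ∈ maxTrivSubmodule ℂ L (L ⊗[ℂ] (V ⊗[ℂ] V)), swapMap L V s = -s) :
    altSquareInvariants L V = (maxTrivSubmodule ℂ L (L ⊗[ℂ] (V ⊗[ℂ] V))).toSubmodule := by
  refine inf_eq_left.mpr fun s hs => ?_
  change swapMap L V s + s = 0
  rw [h s hs, neg_add_cancel]

lemma inv_eq_sym
    (h : ∀ s ∈ maxTrivSubmodule ℂ L (L ⊗[ℂ] (V ⊗[ℂ] V)), swapMap L V s = s) :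
    symSquareInvariants L V = (maxTrivSubmodule ℂ L (L ⊗[ℂ] (V ⊗[ℂ] V))).toSubmodule := by
  refine inf_eq_left.mpr fun s hs => ?_
  change swapMap L V s - s = 0
  rw [h s hs, sub_self]

end Squares

/-- Suppose every fundamental weight of `𝔤` is self-dual, witnessed by
perfect invariant self-pairings of all the fundamental representations `F j` (of highest
weight `ϖ j`).  Then `V_μ` is orthogonal or symplectic; if orthogonal, the `𝔤`-invariant
subspace of `adj(𝔤) ⊗ S²V_μ` vanishes and that of `adj(𝔤) ⊗ Λ²V_μ` has dimension equal to
the number of `j` with `⟨μ, α_j∨⟩ > 0`; if symplectic, the roles are exchanged. -/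
theorem statement19
    {L : Type} [LieRing L] [LieAlgebra ℂ L] [FiniteDimensional ℂ L]
    [LieAlgebra.IsSemisimple ℂ L]
    (H : LieSubalgebra ℂ L) [H.IsCartanSubalgebra]
    {r : ℕ} (α : Fin r → Module.Dual ℂ H) (hc : Fin r → H)
    (hbase : IsBase H α) (hcoroot : ∀ j, IsCoroot H (α j) (hc j))
    (ϖ : Fin r → Module.Dual ℂ H)
    (hϖ : ∀ j k, ϖ j (hc k) = if j = k then (1 : ℂ) else 0)
    (F : Fin r → Type) [∀ j, AddCommGroup (F j)] [∀ j, Module ℂ (F j)]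
    [∀ j, LieRingModule L (F j)] [∀ j, LieModule ℂ L (F j)] [∀ j, FiniteDimensional ℂ (F j)]
    (hF : ∀ j, IsHWIrrep H α (ϖ j) (F j))
    (hselfdualfund : ∀ j, IsDualPair (L := L) (F j) (F j))
    (μ : Module.Dual ℂ H) (hμ : IsDomInt hc μ)
    (Vμ : Type) [AddCommGroup Vμ] [Module ℂ Vμ] [LieRingModule L Vμ]
    [LieModule ℂ L Vμ] [FiniteDimensional ℂ Vμ]
    (hVμ : IsHWIrrep H α μ Vμ) :
    (IsOrthogonalRep (L := L) Vμ ∨ IsSymplecticRep (L := L) Vμ) ∧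
    (IsOrthogonalRep (L := L) Vμ →
      symSquareInvariants L Vμ = ⊥ ∧
      Module.finrank ℂ (altSquareInvariants L Vμ) =
        (Finset.univ.filter fun j => μ (hc j) ≠ 0).card) ∧
    (IsSymplecticRep (L := L) Vμ →
      altSquareInvariants L Vμ = ⊥ ∧
      Module.finrank ℂ (symSquareInvariants L Vμ) =
        (Finset.univ.filter fun j => μ (hc j) ≠ 0).card) := by
  have hK : IsKilling ℂ L := inferInstance
  obtain ⟨hs, v, hv0, hv1, hv2⟩ := hVμ
  obtain ⟨B, ε, hε, hBε, hB, hnd, ⟨a₀, b₀, hab⟩, hsw, hfr⟩ :=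
    inv_main hbase hcoroot hϖ F hF hselfdualfund hμ hs (v := v) ⟨hv0, hv1, hv2⟩
  refine ⟨?_, ?_, ?_⟩
  · rcases hε with rfl | rfl
    · exact Or.inl ⟨B, fun a b => by rw [hBε, one_mul], hnd, hB⟩
    · refine Or.inr ⟨B, fun a => ?_, hnd, hB⟩
      have := hBε a a
      linear_combination (1 / 2 : ℂ) * this
  · rintro ⟨B', hB's, hnd', hB'⟩
    obtain ⟨c, hc'⟩ := form_unique hs hB' hB hnd'
    have hε1 : ε = 1 := by
      have h1 := hBε a₀ b₀
      have h2 : B b₀ a₀ = B a₀ b₀ := by rw [hc', hc', hB's]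
      rw [h2] at h1
      have h3 : (ε - 1) * B a₀ b₀ = 0 := by linear_combination -h1
      linear_combination (mul_eq_zero.mp h3).resolve_right hab
    subst hε1
    exact ⟨inv_bot_sym fun s hs' => by rw [hsw s hs', neg_one_smul],
      by rw [inv_eq_alt fun s hs' => by rw [hsw s hs', neg_one_smul]]; exact hfr⟩
  · rintro ⟨B', hB's, hnd', hB'⟩
    obtain ⟨c, hc'⟩ := form_unique hs hB' hB hnd'
    have hε1 : ε = -1 := by
      have h1 := hBε a₀ b₀
      have h2 : B b₀ a₀ = -B a₀ b₀ := by
        have := hB's (a₀ + b₀)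
        simp only [map_add, LinearMap.add_apply, hB's a₀, hB's b₀] at this
        rw [hc', hc']
        linear_combination c * this
      rw [h2] at h1
      have h3 : (ε + 1) * B a₀ b₀ = 0 := by linear_combination h1
      linear_combination (mul_eq_zero.mp h3).resolve_right hab
    subst hε1
    exact ⟨inv_bot_alt fun s hs' => by rw [hsw s hs', neg_neg, one_smul],
      by rw [inv_eq_sym fun s hs' => by rw [hsw s hs', neg_neg, one_smul]]; exact hfr⟩

end AdjPaper
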